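/- There exist absolute constants 𝒦₂ > 0 and 𝒦₃ > 0 such that: for every n ≥ 2, every n×n real matrix A with σ_A > 0, and every constant 𝒞₁ > 0, if |Δ_y² F_B(z)| ≤ 𝒞₁·(D_A² + y²) for all z ∈ ℝ, all 0 ≤ y ≤ D_A, and all B ∈ N(8, Â), then ‖ℱ_A − e_{1,A}‖ ≤ (𝒦₂·𝒞₁ + 𝒦₃)·D_A². -/

import Mathlib

open Finset MeasureTheory

/-- Density of the standard normal distribution. -/
noncomputable def gaussD (x : ℝ) : ℝ := (Real.sqrt (2 * Real.pi))⁻¹ * Real.exp (-(x ^ 2) / 2)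

/-- Distribution function of the standard normal distribution. -/
noncomputable def gaussCDF (x : ℝ) : ℝ := ∫ t in Set.Iic x, gaussD t

section RankDefs

variable {m : ℕ}

/-- Row mean `a_{i·}`. -/
noncomputable def rowMean (A : Matrix (Fin m) (Fin m) ℝ) (i : Fin m) : ℝ := (∑ j, A i j) / (m : ℝ)

/-- Column mean `a_{·j}`. -/
noncomputable def colMean (A : Matrix (Fin m) (Fin m) ℝ) (j : Fin m) : ℝ := (∑ i, A i j) / (m : ℝ)

/-- Grand mean `a_{··}`. -/
noncomputable def totMean (A : Matrix (Fin m) (Fin m) ℝ) : ℝ := (∑ i, ∑ j, A i j) / (m : ℝ) ^ 2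

/-- Centered entries `a_{ij} − a_{i·} − a_{·j} + a_{··}`. -/
noncomputable def ctr (A : Matrix (Fin m) (Fin m) ℝ) (i j : Fin m) : ℝ :=
  A i j - rowMean A i - colMean A j + totMean A

/-- `σ_A²`. -/
noncomputable def sigma2 (A : Matrix (Fin m) (Fin m) ℝ) : ℝ :=
  (∑ i, ∑ j, ctr A i j ^ 2) / ((m : ℝ) - 1)

/-- `σ_A`. -/
noncomputable def sdev (A : Matrix (Fin m) (Fin m) ℝ) : ℝ := Real.sqrt (sigma2 A)

/-- Standardized matrix `Â = (â_{ij})`. -/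
noncomputable def hatM (A : Matrix (Fin m) (Fin m) ℝ) : Matrix (Fin m) (Fin m) ℝ :=
  fun i j => ctr A i j / sdev A

/-- `μ_A = n·a_{··}`. -/
noncomputable def muM (A : Matrix (Fin m) (Fin m) ℝ) : ℝ := (m : ℝ) * totMean A

/-- The linear rank statistic `T_A(π) = Σ_i a_{iπ(i)}`. -/
noncomputable def rankT (A : Matrix (Fin m) (Fin m) ℝ) (π : Equiv.Perm (Fin m)) : ℝ :=
  ∑ i, A i (π i)

/-- Expectation with respect to the uniform distribution on permutations. -/
noncomputable def permExp (f : Equiv.Perm (Fin m) → ℝ) : ℝ :=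
  (∑ π : Equiv.Perm (Fin m), f π) / (Nat.factorial m : ℝ)

/-- The standardized rank statistic `𝒯_A = (T_A − μ_A)/σ_A`. -/
noncomputable def rankTstd (A : Matrix (Fin m) (Fin m) ℝ) (π : Equiv.Perm (Fin m)) : ℝ :=
  (rankT A π - muM A) / sdev A

/-- `F_A`, the distribution function of `T_A`. -/
noncomputable def Fr (A : Matrix (Fin m) (Fin m) ℝ) (z : ℝ) : ℝ :=
  permExp (fun π => if rankT A π ≤ z then (1 : ℝ) else 0)

/-- `ℱ_A`, the distribution function of `𝒯_A`. -/
noncomputable def Fstd (A : Matrix (Fin m) (Fin m) ℝ) (z : ℝ) : ℝ :=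
  permExp (fun π => if rankTstd A π ≤ z then (1 : ℝ) else 0)

/-- `β_A = Σ_{i,j} |â_{ij}|³`. -/
noncomputable def betaM (A : Matrix (Fin m) (Fin m) ℝ) : ℝ := ∑ i, ∑ j, |hatM A i j| ^ 3

/-- `δ_A = Σ_{i,j} |â_{ij}|⁴`. -/
noncomputable def deltaM (A : Matrix (Fin m) (Fin m) ℝ) : ℝ := ∑ i, ∑ j, |hatM A i j| ^ 4

/-- `η_A = Σ_{i,j} |â_{ij}|⁵`. -/
noncomputable def etaM (A : Matrix (Fin m) (Fin m) ℝ) : ℝ := ∑ i, ∑ j, |hatM A i j| ^ 5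

/-- `D_A = (δ_A/n)^{1/2}`. -/
noncomputable def DM (A : Matrix (Fin m) (Fin m) ℝ) : ℝ := Real.sqrt (deltaM A / (m : ℝ))

/-- `E_A = (η_A/n)^{1/3}`. -/
noncomputable def EM (A : Matrix (Fin m) (Fin m) ℝ) : ℝ := (etaM A / (m : ℝ)) ^ ((1 : ℝ) / 3)

/-- `λ_{1,A} = (1/n)Σ_{i,j} â_{ij}³`. -/
noncomputable def lam1 (A : Matrix (Fin m) (Fin m) ℝ) : ℝ := (∑ i, ∑ j, hatM A i j ^ 3) / (m : ℝ)

/-- `λ_{2,A}`. -/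
noncomputable def lam2 (A : Matrix (Fin m) (Fin m) ℝ) : ℝ :=
  (∑ i, ∑ j, hatM A i j ^ 4) / (m : ℝ) + 3 / (m : ℝ)
    - 3 / (m : ℝ) ^ 2 *
        ∑ i, ∑ j, ∑ k, (hatM A i j ^ 2 * hatM A i k ^ 2 + hatM A i j ^ 2 * hatM A k j ^ 2)

/-- First-order Edgeworth expansion `e_{1,A}`. -/
noncomputable def edge1 (A : Matrix (Fin m) (Fin m) ℝ) (x : ℝ) : ℝ :=
  gaussCDF x - gaussD x * (lam1 A / 6) * (x ^ 2 - 1)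

/-- Second-order Edgeworth expansion `e_{2,A}`. -/
noncomputable def edge2 (A : Matrix (Fin m) (Fin m) ℝ) (x : ℝ) : ℝ :=
  gaussCDF x - gaussD x *
    (lam1 A / 6 * (x ^ 2 - 1) + lam2 A / 24 * (x ^ 3 - 3 * x)
      + lam1 A ^ 2 / 72 * (x ^ 5 - 10 * x ^ 3 + 15 * x))

/-- `k`-th iterated difference `Δ_y^k G`. -/
noncomputable def Δiter (y : ℝ) (k : ℕ) (G : ℝ → ℝ) : ℝ → ℝ :=
  (fun (G : ℝ → ℝ) (z : ℝ) => G (z + y) - G z)^[k] G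

/-- The interpolating polynomial `P_y^k(x; z, F)` of `F` at the points `z, z+y, …, z+ky`. -/
noncomputable def interp (y : ℝ) (k : ℕ) (z : ℝ) (F : ℝ → ℝ) (x : ℝ) : ℝ :=
  F z + ∑ s ∈ Finset.Icc 1 k,
    Δiter y s F z * ∏ i ∈ Finset.Icc 1 s, (x - z - ((i : ℝ) - 1) * y) / ((i : ℝ) * y)

end RankDefs

/-!
Stein's method. Smooth the distribution function of `T_A` by the hat kernel of width `D = D_A`, and
let `u` be a second antiderivative of the result that vanishes at `-∞`. Exchanging two images of the
random permutation gives Stein's identity for `T_A`, by which `u'' + x u' - 2 u` equals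
`(λ₁ / 2) u'''` up to an error of order `D²`. A second antiderivative of the Edgeworth expansion
solves this equation with the normal density in place of `u'''`; since `|λ₁| ≤ D`, a cruder estimate
of the same kind, with an error of order `D`, suffices to replace one by the other. The maximum
principle then bounds the difference of the two solutions, and an integrating factor bounds the
difference of their second derivatives.

The hypothesis on `Δ_y² F_B` enters twice. It makes the smoothed density, averaged over the rank
statistics of minors with at most eight deleted rows, Lipschitz, which takes the place of a smooth
test function in the remainder of Stein's identity; and it bounds the error of the smoothing.
-/

/-! ### Rank statistics of submatrices -/

section BijectionSums

variable {ι κ : Type*} [DecidableEq ι] [DecidableEq κ]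

/-- The elements of a finset other than `i`, as a subtype of the finset and as a finset. -/
def subtypeNeEquivErase (s : Finset ι) (i : s) : {r : s // r ≠ i} ≃ s.erase i where
  toFun r := ⟨r, mem_erase.2 ⟨fun h => r.2 (Subtype.ext h), r.1.2⟩⟩
  invFun r := ⟨⟨r, mem_of_mem_erase r.2⟩, fun h => ne_of_mem_erase r.2 (congrArg Subtype.val h)⟩

/-- A bijection `R ≃ C` is determined by the image `l` of `i` and by its restriction to the
other rows. -/
def equivSigmaErase {R : Finset ι} (C : Finset κ) (i : R) :
    (R ≃ C) ≃ Σ l : C, (R.erase i ≃ C.erase l) :=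
  ((Equiv.equivCongr (Equiv.optionSubtypeNe i).symm (Equiv.refl C)).trans
    (Equiv.sigmaFiberEquiv fun e => e none).symm).trans
  (Equiv.sigmaCongrRight fun l => (Equiv.optionSubtype l).trans
    (Equiv.equivCongr (subtypeNeEquivErase R i) (subtypeNeEquivErase C l)))

theorem equivSigmaErase_symm_apply_self {R : Finset ι} {C : Finset κ} (i : R) (l : C)
    (τ : R.erase i ≃ C.erase l) : (equivSigmaErase C i).symm ⟨l, τ⟩ i = l := by
  change ((Equiv.optionSubtype l).symm _).1 ((Equiv.optionSubtypeNe i).symm i) = l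
  rw [Equiv.optionSubtypeNe_symm_self, Equiv.optionSubtype_symm_apply_apply_none]

theorem coe_equivSigmaErase_symm_apply {R : Finset ι} {C : Finset κ} (i : R) (l : C)
    (τ : R.erase i ≃ C.erase l) (r : {r : R // r ≠ i}) :
    ((equivSigmaErase C i).symm ⟨l, τ⟩ r : κ) = τ (subtypeNeEquivErase R i r) := by
  change (((Equiv.optionSubtype l).symm _).1 ((Equiv.optionSubtypeNe i).symm r) : κ) = _
  rw [Equiv.optionSubtypeNe_symm_of_ne r.2, Equiv.optionSubtype_symm_apply_apply_some]
  rfl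

theorem sum_equivSigmaErase_symm (a : Matrix ι κ ℝ) {R : Finset ι} {C : Finset κ} (i : R) (l : C)
    (τ : R.erase i ≃ C.erase l) :
    ∑ r : R, a r ((equivSigmaErase C i).symm ⟨l, τ⟩ r) =
      a i l + ∑ r : R.erase i, a r (τ r) := by
  rw [Fintype.sum_eq_add_sum_subtype_ne _ i, equivSigmaErase_symm_apply_self]
  congr 1
  refine Fintype.sum_equiv (subtypeNeEquivErase R i) _ _ fun r => ?_
  rw [coe_equivSigmaErase_symm_apply]
  rfl

theorem sum_equiv_eq_sum_erase (a : Matrix ι κ ℝ) {R : Finset ι} (C : Finset κ) (i : R)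
    (F : κ → ℝ → ℝ) :
    ∑ σ : R ≃ C, F (σ i) (∑ r : R, a r (σ r)) =
      ∑ l ∈ C, ∑ τ : R.erase i ≃ C.erase l, F l (a i l + ∑ r : R.erase i, a r (τ r)) := by
  rw [← (equivSigmaErase C i).symm.sum_comp, Fintype.sum_sigma, ← sum_coe_sort C]
  simp only [sum_equivSigmaErase_symm, equivSigmaErase_symm_apply_self]

end BijectionSums

section MinorMean

variable {ι κ : Type*} [DecidableEq ι] [DecidableEq κ]

/-- The mean of `φ (x + T_B)`, where `B` is the submatrix of `a` with rows `R` and columns `C`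
and `T_B` is its rank statistic. Bijections `R ≃ C` replace permutations, so that rows and columns
can be deleted without relabelling; if `#R ≠ #C` there are none and the value is `0`. -/
noncomputable def minorMean (a : Matrix ι κ ℝ) (R : Finset ι) (C : Finset κ) (φ : ℝ → ℝ) (x : ℝ) :
    ℝ :=
  (∑ σ : R ≃ C, φ (x + ∑ r : R, a r (σ r))) / (#R).factorial

theorem minorMean_transpose (a : Matrix ι κ ℝ) {R : Finset ι} {C : Finset κ} (h : #R = #C)
    (φ : ℝ → ℝ) (x : ℝ) : minorMean a.transpose C R φ x = minorMean a R C φ x := by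
  unfold minorMean
  rw [h]
  congr 1
  refine Fintype.sum_equiv ⟨Equiv.symm, Equiv.symm, Equiv.symm_symm, Equiv.symm_symm⟩ _ _
    fun σ => ?_
  rw [← σ.sum_comp]
  simp

theorem hasDerivAt_minorMean (a : Matrix ι κ ℝ) (R : Finset ι) (C : Finset κ) {f f' : ℝ → ℝ}
    (hf : ∀ t, HasDerivAt f (f' t) t) (x : ℝ) :
    HasDerivAt (minorMean a R C f) (minorMean a R C f' x) x :=
  (HasDerivAt.fun_sum fun _ _ => (hf _).comp_add_const x _).div_const _

theorem minorMean_eq_permExp {m : ℕ} (a : Matrix ι κ ℝ) {R : Finset ι} {C : Finset κ}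
    (eR : Fin m ≃ R) (eC : Fin m ≃ C) (φ : ℝ → ℝ) (x : ℝ) :
    minorMean a R C φ x =
      permExp fun π => φ (x + rankT (fun i j => a (eR i) (eC j)) π) := by
  have hm : #R = m := by simpa using (Fintype.card_congr eR).symm
  unfold minorMean permExp rankT
  rw [hm, ← (Equiv.equivCongr eR eC).sum_comp]
  congr 1
  refine sum_congr rfl fun π _ => ?_
  rw [← eR.sum_comp]
  simp [Equiv.equivCongr]

theorem minorMean_univ {n : ℕ} (a : Matrix (Fin n) (Fin n) ℝ) (φ : ℝ → ℝ) (x : ℝ) :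
    minorMean a univ univ φ x = permExp fun π => φ (x + rankT a π) :=
  minorMean_eq_permExp a (Equiv.subtypeUnivEquiv mem_univ).symm
    (Equiv.subtypeUnivEquiv mem_univ).symm φ x

theorem minorMean_row_expansion (a : Matrix ι κ ℝ) {R : Finset ι} (C : Finset κ) {i : ι}
    (hi : i ∈ R) (φ : ℝ → ℝ) (x : ℝ) :
    #R * minorMean a R C φ x = ∑ l ∈ C, minorMean a (R.erase i) (C.erase l) φ (x + a i l) := by
  have hR : (#R : ℝ) ≠ 0 := Nat.cast_ne_zero.2 (card_pos.2 ⟨i, hi⟩).ne'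
  have hfac : ((#R).factorial : ℝ) = #R * (#(R.erase i)).factorial := by
    rw [card_erase_of_mem hi]
    exact_mod_cast (Nat.mul_factorial_pred (Nat.cast_ne_zero.1 hR)).symm
  have hsum := sum_equiv_eq_sum_erase a C ⟨i, hi⟩ fun _ s => φ (x + s)
  unfold minorMean
  rw [hsum, hfac, mul_div_assoc', mul_div_mul_left _ _ hR, ← sum_div]
  simp only [add_assoc]

theorem minorMean_col_expansion (a : Matrix ι κ ℝ) {R : Finset ι} {C : Finset κ} (h : #R = #C)
    {j : κ} (hj : j ∈ C) (φ : ℝ → ℝ) (x : ℝ) :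
    #R * minorMean a R C φ x = ∑ k ∈ R, minorMean a (R.erase k) (C.erase j) φ (x + a k j) := by
  rw [← minorMean_transpose a h, h, minorMean_row_expansion _ _ hj]
  refine sum_congr rfl fun k hk => minorMean_transpose a ?_ φ _
  rw [card_erase_of_mem hk, card_erase_of_mem hj, h]

theorem permExp_apply_mul {n : ℕ} (a : Matrix (Fin n) (Fin n) ℝ) (i : Fin n) (φ : ℝ → ℝ) :
    n * permExp (fun π => a i (π i) * φ (rankT a π)) =
      ∑ l, a i l * minorMean a (univ.erase i) (univ.erase l) φ (a i l) := by
  have hn : (n : ℝ) ≠ 0 := Nat.cast_ne_zero.2 i.pos.ne'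
  have hfac : (n.factorial : ℝ) = n * (#(univ.erase i)).factorial := by
    rw [card_erase_of_mem (mem_univ i), card_univ, Fintype.card_fin]
    exact_mod_cast (Nat.mul_factorial_pred i.pos.ne').symm
  let e : univ ≃ Fin n := Equiv.subtypeUnivEquiv mem_univ
  have hsum := sum_equiv_eq_sum_erase a univ ⟨i, mem_univ i⟩ fun l s => a i l * φ s
  rw [← (Equiv.equivCongr e e).symm.sum_comp] at hsum
  have hT (π : Equiv.Perm (Fin n)) : ∑ r : univ, a r ((Equiv.equivCongr e e).symm π r) =
      rankT a π := e.sum_comp fun r => a r (π r)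
  simp only [hT] at hsum
  unfold permExp minorMean
  rw [hfac, mul_div_assoc', mul_div_mul_left _ _ hn]
  simp only [mul_div_assoc', mul_sum]
  rw [← sum_div]
  exact congrArg (· / _) hsum

theorem permExp_rankT_mul {n : ℕ} (a : Matrix (Fin n) (Fin n) ℝ) (φ : ℝ → ℝ) :
    n * permExp (fun π => rankT a π * φ (rankT a π)) =
      ∑ i, ∑ l, a i l * minorMean a (univ.erase i) (univ.erase l) φ (a i l) := by
  simp only [← permExp_apply_mul, ← mul_sum]
  unfold permExp
  rw [← sum_div, sum_comm]
  refine congrArg (fun s : ℝ => n * (s / _)) (sum_congr rfl fun π _ => ?_)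
  simp only [rankT, sum_mul]

end MinorMean

/-! ### The Stein identity -/

section Stein

variable {n : ℕ} {a : Matrix (Fin n) (Fin n) ℝ}

/-- The change of `T_a` when a permutation with `i ↦ l`, `k ↦ j` is composed with a transposition,
so that `i ↦ j`, `k ↦ l`. -/
def swapDiff (a : Matrix (Fin n) (Fin n) ℝ) (i k j l : Fin n) : ℝ := a i j + a k l - (a i l + a k j)

theorem swapDiff_self_left (i j l : Fin n) : swapDiff a i i j l = 0 := by
  unfold swapDiff; ring

theorem swapDiff_self_right (i k j : Fin n) : swapDiff a i k j j = 0 := by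
  unfold swapDiff; ring

theorem swapDiff_swap_right (i k j l : Fin n) : swapDiff a i k l j = -swapDiff a i k j l := by
  unfold swapDiff; ring

/-- The mean of `φ (x + T_B)`, where `B` is `a` without the rows `i`, `k` and the columns `j`,
`l`. -/
noncomputable def minorMean₂ (a : Matrix (Fin n) (Fin n) ℝ) (i k j l : Fin n) (φ : ℝ → ℝ) (x : ℝ) :
    ℝ :=
  minorMean a ((univ.erase i).erase k) ((univ.erase j).erase l) φ x

theorem minorMean₂_swap_left (i k j l : Fin n) : minorMean₂ a k i j l = minorMean₂ a i k j l := by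
  unfold minorMean₂; rw [erase_right_comm]

theorem minorMean₂_swap_right (i k j l : Fin n) : minorMean₂ a i k l j = minorMean₂ a i k j l := by
  unfold minorMean₂; rw [erase_right_comm (a := l)]

theorem sum_minorMean₂ {i k : Fin n} (hk : k ∈ univ.erase i) (j : Fin n) (φ : ℝ → ℝ) (x : ℝ) :
    ∑ l ∈ univ.erase j, minorMean₂ a i k j l φ (x + a k l) =
      (n - 1) * minorMean a (univ.erase i) (univ.erase j) φ x := by
  have hcard : ((#(univ.erase i) : ℕ) : ℝ) = n - 1 := by
    rw [cast_card_erase_of_mem (mem_univ i), card_univ, Fintype.card_fin]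
  rw [← hcard, minorMean_row_expansion a _ hk]
  rfl

theorem sum_mul_minorMean₂ (φ : ℝ → ℝ) (w : Fin n → Fin n → Fin n → ℝ) :
    ∑ i, ∑ k ∈ univ.erase i, ∑ j, ∑ l ∈ univ.erase j,
        w i k j * minorMean₂ a i k j l φ (a i j + a k l) =
      (n - 1) * ∑ i, ∑ j, (∑ k ∈ univ.erase i, w i k j) *
        minorMean a (univ.erase i) (univ.erase j) φ (a i j) := by
  rw [mul_sum]
  refine sum_congr rfl fun i _ => ?_
  rw [sum_comm, mul_sum]
  refine sum_congr rfl fun j _ => ?_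
  rw [sum_mul, mul_sum]
  refine sum_congr rfl fun k hk => ?_
  rw [← mul_sum, sum_minorMean₂ hk]
  ring

theorem sum_apply_mul_minorMean₂ (φ : ℝ → ℝ) :
    ∑ i, ∑ k ∈ univ.erase i, ∑ j, ∑ l ∈ univ.erase j,
        a i j * minorMean₂ a i k j l φ (a i j + a k l) =
      n * (n - 1) ^ 2 * permExp fun π => rankT a π * φ (rankT a π) := by
  have hcard (i : Fin n) : ((#(univ.erase i) : ℕ) : ℝ) = n - 1 := by
    rw [cast_card_erase_of_mem (mem_univ i), card_univ, Fintype.card_fin]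
  rw [sum_mul_minorMean₂ φ fun i _ j => a i j]
  simp only [sum_const, nsmul_eq_mul, hcard, mul_assoc, ← mul_sum, ← permExp_rankT_mul]
  ring

theorem sum_apply_mul_minorMean₂_of_col (hcol : ∀ j, ∑ i, a i j = 0) (φ : ℝ → ℝ) :
    ∑ i, ∑ k ∈ univ.erase i, ∑ j, ∑ l ∈ univ.erase j,
        a k j * minorMean₂ a i k j l φ (a i j + a k l) =
      -(n * (n - 1) * permExp fun π => rankT a π * φ (rankT a π)) := by
  have hsum (i j : Fin n) : ∑ k ∈ univ.erase i, a k j = -a i j := by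
    rw [sum_erase_eq_sub (mem_univ i), hcol, zero_sub]
  rw [sum_mul_minorMean₂ φ fun _ k j => a k j]
  simp only [hsum, neg_mul, sum_neg_distrib, ← permExp_rankT_mul]
  ring

theorem sum_sum_erase_comm (F : Fin n → Fin n → ℝ) :
    ∑ i, ∑ k ∈ univ.erase i, F i k = ∑ i, ∑ k ∈ univ.erase i, F k i :=
  sum_comm' fun i k => by simp [eq_comm]

theorem sum_erase_swap (F : Fin n → Fin n → Fin n → Fin n → ℝ) :
    ∑ i, ∑ k ∈ univ.erase i, ∑ j, ∑ l ∈ univ.erase j, F k i l j =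
      ∑ i, ∑ k ∈ univ.erase i, ∑ j, ∑ l ∈ univ.erase j, F i k j l := by
  rw [sum_sum_erase_comm]
  exact sum_congr rfl fun i _ => sum_congr rfl fun k _ => sum_sum_erase_comm _

theorem sum_swapDiff_mul_minorMean₂ (hcol : ∀ j, ∑ i, a i j = 0) (φ : ℝ → ℝ) :
    ∑ i, ∑ k, ∑ j, ∑ l, swapDiff a i k j l * minorMean₂ a i k j l φ (a i j + a k l) =
      2 * n ^ 2 * (n - 1) * permExp fun π => rankT a π * φ (rankT a π) := by
  have hsymm (i k j l : Fin n) : minorMean₂ a i k j l φ (a i j + a k l) =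
      minorMean₂ a k i l j φ (a k l + a i j) := by
    rw [minorMean₂_swap_left, minorMean₂_swap_right, add_comm]
  have herase : ∑ i, ∑ k, ∑ j, ∑ l, swapDiff a i k j l * minorMean₂ a i k j l φ (a i j + a k l) =
      ∑ i, ∑ k ∈ univ.erase i, ∑ j, ∑ l ∈ univ.erase j,
        swapDiff a i k j l * minorMean₂ a i k j l φ (a i j + a k l) := by
    refine sum_congr rfl fun i _ => ?_
    rw [sum_erase _ (by simp only [swapDiff_self_left, zero_mul, sum_const_zero])]
    refine sum_congr rfl fun k _ => sum_congr rfl fun j _ => ?_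
    rw [sum_erase _ (by rw [swapDiff_self_right, zero_mul])]
  have h₁ := sum_apply_mul_minorMean₂ (a := a) φ
  have h₂ := sum_apply_mul_minorMean₂_of_col hcol φ
  have h₃ := h₁
  have h₄ := h₂
  rw [← sum_erase_swap] at h₃ h₄
  simp only [← hsymm] at h₃ h₄
  rw [herase]
  simp only [swapDiff, sub_mul, add_mul, sum_sub_distrib, sum_add_distrib]
  linear_combination h₁ + h₃ - h₂ - h₄

theorem stein_identity (hcol : ∀ j, ∑ i, a i j = 0) (φ : ℝ → ℝ) :
    4 * n ^ 2 * (n - 1) * permExp (fun π => rankT a π * φ (rankT a π)) =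
      ∑ i, ∑ k, ∑ j, ∑ l, swapDiff a i k j l *
        (minorMean₂ a i k j l φ (a i j + a k l) - minorMean₂ a i k j l φ (a i l + a k j)) := by
  have hswap : ∑ i, ∑ k, ∑ j, ∑ l, swapDiff a i k j l * minorMean₂ a i k j l φ (a i l + a k j) =
      -∑ i, ∑ k, ∑ j, ∑ l, swapDiff a i k j l * minorMean₂ a i k j l φ (a i j + a k l) := by
    simp only [← sum_neg_distrib]
    refine sum_congr rfl fun i _ => sum_congr rfl fun k _ => ?_
    rw [sum_comm]
    refine sum_congr rfl fun j _ => sum_congr rfl fun l _ => ?_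
    rw [swapDiff_swap_right, minorMean₂_swap_right, neg_mul]
  simp only [mul_sub, sum_sub_distrib]
  rw [hswap, sum_swapDiff_mul_minorMean₂ hcol]
  ring

end Stein

/-! ### Taylor estimates -/

section Taylor

variable {g g' g'' : ℝ → ℝ} {L B u v : ℝ}

theorem abs_sub_le_of_abs_deriv_le (hg : ∀ t, HasDerivAt g (g' t) t)
    (hB : ∀ t, |t| ≤ |u| + |v| → |g' t| ≤ B) : |g u - g v| ≤ B * |u - v| :=
  (convex_Icc (-(|u| + |v|)) (|u| + |v|)).norm_image_sub_le_of_norm_hasDerivWithin_le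
    (fun t _ => (hg t).hasDerivWithinAt) (fun t ht => hB t (abs_le.2 ht))
    (abs_le.1 (le_add_of_nonneg_left (abs_nonneg u)))
    (abs_le.1 (le_add_of_nonneg_right (abs_nonneg v)))

theorem nonneg_of_abs_sub_le (hL : ∀ x y, |g x - g y| ≤ L * |x - y|) : 0 ≤ L := by
  simpa using (abs_nonneg _).trans (hL 1 0)

theorem abs_sub_le_of_lipschitz_deriv (hg : ∀ t, HasDerivAt g (g' t) t)
    (hL : ∀ x y, |g' x - g' y| ≤ L * |x - y|) (hB : |g' 0| ≤ B) :
    |g u - g v| ≤ (L * (|u| + |v|) + B) * |u - v| := by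
  have hL0 := nonneg_of_abs_sub_le hL
  refine abs_sub_le_of_abs_deriv_le hg fun t ht => ?_
  calc |g' t| = |(g' t - g' 0) + g' 0| := by rw [sub_add_cancel]
    _ ≤ |g' t - g' 0| + |g' 0| := abs_add_le _ _
    _ ≤ L * |t| + B := add_le_add (by simpa using hL t 0) hB
    _ ≤ L * (|u| + |v|) + B := by gcongr

theorem abs_sub_sub_mul_le_of_lipschitz_deriv (hg : ∀ t, HasDerivAt g (g' t) t)
    (hL : ∀ x y, |g' x - g' y| ≤ L * |x - y|) :
    |g u - g v - (u - v) * g' 0| ≤ L * (|u| + |v|) * |u - v| := by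
  have h := abs_sub_le_of_lipschitz_deriv (g := fun t => g t - t * g' 0)
    (g' := fun t => g' t - g' 0) (B := 0) (u := u) (v := v)
    (fun t => by simpa using (hg t).fun_sub ((hasDerivAt_id t).mul_const (g' 0)))
    (fun x y => by simpa using hL x y) (by simp)
  calc _ = |g u - u * g' 0 - (g v - v * g' 0)| := by congr 1; ring
    _ ≤ _ := h
    _ = _ := by rw [add_zero]

theorem abs_sub_sub_sub_le_of_lipschitz_deriv₂ (hg : ∀ t, HasDerivAt g (g' t) t)
    (hg' : ∀ t, HasDerivAt g' (g'' t) t) (hL : ∀ x y, |g'' x - g'' y| ≤ L * |x - y|) :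
    |g u - g v - (u - v) * g' 0 - (u ^ 2 - v ^ 2) / 2 * g'' 0| ≤
      L * (|u| + |v|) ^ 2 * |u - v| := by
  have hL0 := nonneg_of_abs_sub_le hL
  have hderiv (t : ℝ) : HasDerivAt (fun t => g t - t * g' 0 - t ^ 2 / 2 * g'' 0)
      (g' t - g' 0 - t * g'' 0) t := by
    refine (((hg t).fun_sub ((hasDerivAt_id t).mul_const (g' 0))).fun_sub
      ((((hasDerivAt_id t).pow 2).div_const 2).mul_const (g'' 0))).congr_deriv ?_
    simp
  have hbound (t : ℝ) (ht : |t| ≤ |u| + |v|) :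
      |g' t - g' 0 - t * g'' 0| ≤ L * (|u| + |v|) ^ 2 := by
    have h := abs_sub_sub_mul_le_of_lipschitz_deriv (u := t) (v := 0) hg' hL
    simp only [sub_zero, abs_zero, add_zero] at h
    calc _ ≤ L * |t| * |t| := h
      _ ≤ L * (|u| + |v|) * (|u| + |v|) := by gcongr
      _ = _ := by ring
  calc _ = |g u - u * g' 0 - u ^ 2 / 2 * g'' 0 - (g v - v * g' 0 - v ^ 2 / 2 * g'' 0)| := by
        congr 1; ring
    _ ≤ _ := abs_sub_le_of_abs_deriv_le hderiv hbound

end Taylor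

/-! ### Entrywise majorants -/

section CrossMean

variable {n : ℕ} {a u : Matrix (Fin n) (Fin n) ℝ}

/-- The entry `u i j` plus the means of its row, of its column and of the whole matrix. For
nonnegative `u` it majorizes all these quantities. -/
noncomputable def crossMean (u : Matrix (Fin n) (Fin n) ℝ) (i j : Fin n) : ℝ :=
  u i j + (∑ l, u i l) / n + (∑ k, u k j) / n + (∑ k, ∑ l, u k l) / n ^ 2

/-- `W` majorizes the means of the row `i`, of the column `j` and of the whole matrix `u`. -/
structure LineMeansLE (u : Matrix (Fin n) (Fin n) ℝ) (i j : Fin n) (W : ℝ) : Prop where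
  row : ∑ l, u i l ≤ n * W
  col : ∑ k, u k j ≤ n * W
  total : ∑ k, ∑ l, u k l ≤ n ^ 2 * W

theorem crossMean_nonneg (hu : ∀ i j, 0 ≤ u i j) (i j : Fin n) : 0 ≤ crossMean u i j := by
  have hrow : 0 ≤ ∑ l, u i l := sum_nonneg fun l _ => hu i l
  have hcol : 0 ≤ ∑ k, u k j := sum_nonneg fun k _ => hu k j
  have htotal : 0 ≤ ∑ k, ∑ l, u k l := sum_nonneg fun k _ => sum_nonneg fun l _ => hu k l
  have hentry := hu i j
  unfold crossMean
  positivity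

theorem le_crossMean (hu : ∀ i j, 0 ≤ u i j) (i j : Fin n) : u i j ≤ crossMean u i j := by
  have hrow : 0 ≤ ∑ l, u i l := sum_nonneg fun l _ => hu i l
  have hcol : 0 ≤ ∑ k, u k j := sum_nonneg fun k _ => hu k j
  have htotal : 0 ≤ ∑ k, ∑ l, u k l := sum_nonneg fun k _ => sum_nonneg fun l _ => hu k l
  unfold crossMean
  rw [add_assoc, add_assoc]
  exact le_add_of_nonneg_right (by positivity)

theorem lineMeansLE_crossMean (hu : ∀ i j, 0 ≤ u i j) (i j : Fin n) :
    LineMeansLE u i j (crossMean u i j) := by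
  have hn : (0 : ℝ) < n := Nat.cast_pos.2 i.pos
  have hentry := hu i j
  have hrow : 0 ≤ (∑ l, u i l) / n := div_nonneg (sum_nonneg fun l _ => hu i l) hn.le
  have hcol : 0 ≤ (∑ k, u k j) / n := div_nonneg (sum_nonneg fun k _ => hu k j) hn.le
  have htotal : 0 ≤ (∑ k, ∑ l, u k l) / (n : ℝ) ^ 2 :=
    div_nonneg (sum_nonneg fun k _ => sum_nonneg fun l _ => hu k l) (sq_nonneg _)
  constructor
  · rw [← div_le_iff₀' hn]; unfold crossMean; linarith
  · rw [← div_le_iff₀' hn]; unfold crossMean; linarith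
  · rw [← div_le_iff₀' (pow_pos hn 2)]; unfold crossMean; linarith

theorem crossMean_transpose (i j : Fin n) : crossMean u.transpose i j = crossMean u j i := by
  unfold crossMean
  simp only [Matrix.transpose_apply]
  rw [sum_comm]
  ring

theorem sum_crossMean_row (i : Fin n) :
    ∑ l, crossMean u i l = 2 * ∑ l, u i l + 2 * ((∑ k, ∑ l, u k l) / n) := by
  have hn : (n : ℝ) ≠ 0 := Nat.cast_ne_zero.2 i.pos.ne'
  unfold crossMean
  simp only [sum_add_distrib, sum_const, card_univ, Fintype.card_fin, nsmul_eq_mul, ← sum_div]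
  rw [sum_comm (f := fun l k => u k l)]
  field_simp
  ring

theorem sum_sum_crossMean : ∑ k, ∑ l, crossMean u k l = 4 * ∑ k, ∑ l, u k l := by
  rcases eq_or_ne (n : ℝ) 0 with hn | hn
  · obtain rfl := Nat.cast_eq_zero.1 hn
    simp
  simp only [sum_crossMean_row, sum_add_distrib, sum_const, card_univ, Fintype.card_fin,
    nsmul_eq_mul, ← mul_sum]
  field_simp
  ring

theorem sum_crossMean_row_le (hu : ∀ i j, 0 ≤ u i j) (i j : Fin n) :
    ∑ l, crossMean u i l ≤ n * (4 * crossMean u i j) := by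
  have hn : (0 : ℝ) < n := Nat.cast_pos.2 i.pos
  have h := lineMeansLE_crossMean hu i j
  have htotal : (∑ k, ∑ l, u k l) / n ≤ n * crossMean u i j := by
    rw [div_le_iff₀' hn, ← mul_assoc, ← sq]
    exact h.total
  rw [sum_crossMean_row]
  linarith [h.row]

theorem lineMeansLE_crossMean_crossMean (hu : ∀ i j, 0 ≤ u i j) (i j : Fin n) :
    LineMeansLE (crossMean u) i j (4 * crossMean u i j) where
  row := sum_crossMean_row_le hu i j
  col := by
    have h := sum_crossMean_row_le (u := u.transpose) (fun i j => hu j i) j i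
    simpa only [crossMean_transpose] using h
  total := by
    rw [sum_sum_crossMean]
    linarith [(lineMeansLE_crossMean hu i j).total]

theorem sq_sum_div_le (f : Fin n → ℝ) : ((∑ l, f l) / n) ^ 2 ≤ (∑ l, f l ^ 2) / n := by
  simpa using sum_div_card_sq_le_sum_sq_div_card (s := univ) (f := f)

theorem sq_sum_sum_div_le (u : Matrix (Fin n) (Fin n) ℝ) :
    ((∑ k, ∑ l, u k l) / n ^ 2) ^ 2 ≤ (∑ k, ∑ l, u k l ^ 2) / n ^ 2 := by
  simpa [Fintype.sum_prod_type, ← sq] using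
    sum_div_card_sq_le_sum_sq_div_card (s := univ) (f := fun p : Fin n × Fin n => u p.1 p.2)

theorem sq_crossMean_le (i j : Fin n) :
    crossMean u i j ^ 2 ≤ 4 * crossMean (fun i j => u i j ^ 2) i j := by
  have four_terms (w x y z : ℝ) : (w + x + y + z) ^ 2 ≤ 4 * (w ^ 2 + x ^ 2 + y ^ 2 + z ^ 2) := by
    nlinarith [sq_nonneg (w - x), sq_nonneg (w - y), sq_nonneg (w - z), sq_nonneg (x - y),
      sq_nonneg (x - z), sq_nonneg (y - z)]
  unfold crossMean
  refine (four_terms _ _ _ _).trans ?_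
  gcongr
  exacts [sq_sum_div_le _, sq_sum_div_le _, sq_sum_sum_div_le u]

theorem LineMeansLE.abs_sqrt {i j : Fin n} {W : ℝ}
    (h : LineMeansLE (fun i j => u i j ^ 2) i j W) : LineMeansLE (fun i j => |u i j|) i j √W := by
  have hn : (0 : ℝ) < n := Nat.cast_pos.2 i.pos
  constructor
  · rw [← div_le_iff₀' hn]
    refine Real.le_sqrt_of_sq_le ((sq_sum_div_le _).trans ?_)
    simpa only [sq_abs, div_le_iff₀' hn] using h.row
  · rw [← div_le_iff₀' hn]
    refine Real.le_sqrt_of_sq_le ((sq_sum_div_le _).trans ?_)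
    simpa only [sq_abs, div_le_iff₀' hn] using h.col
  · rw [← div_le_iff₀' (pow_pos hn 2)]
    refine Real.le_sqrt_of_sq_le ((sq_sum_sum_div_le _).trans ?_)
    simpa only [sq_abs, div_le_iff₀' (pow_pos hn 2)] using h.total

/-- A majorant of `|a i j|` and of the quadratic means of its row, of its column and of the whole
matrix. -/
noncomputable def crossNorm (a : Matrix (Fin n) (Fin n) ℝ) (i j : Fin n) : ℝ :=
  √(crossMean (fun i j => a i j ^ 2) i j)

theorem crossNorm_nonneg (i j : Fin n) : 0 ≤ crossNorm a i j :=
  Real.sqrt_nonneg _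

theorem sq_crossNorm (i j : Fin n) : crossNorm a i j ^ 2 = crossMean (fun i j => a i j ^ 2) i j :=
  Real.sq_sqrt (crossMean_nonneg (fun _ _ => sq_nonneg _) i j)

theorem abs_le_crossNorm (i j : Fin n) : |a i j| ≤ crossNorm a i j :=
  Real.abs_le_sqrt (le_crossMean (u := fun i j => a i j ^ 2) (fun _ _ => sq_nonneg _) i j)

theorem lineMeansLE_abs (i j : Fin n) :
    LineMeansLE (fun i j => |a i j|) i j (crossNorm a i j) :=
  (lineMeansLE_crossMean (fun _ _ => sq_nonneg _) i j).abs_sqrt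

theorem lineMeansLE_sq_crossNorm (i j : Fin n) :
    LineMeansLE (fun i j => crossNorm a i j ^ 2) i j (4 * crossNorm a i j ^ 2) := by
  simp only [sq_crossNorm]
  exact lineMeansLE_crossMean_crossMean (fun _ _ => sq_nonneg _) i j

theorem sum_sum_crossNorm_sq :
    ∑ i, ∑ j, crossNorm a i j ^ 2 = 4 * ∑ i, ∑ j, a i j ^ 2 := by
  simp only [sq_crossNorm]
  exact sum_sum_crossMean

theorem sum_sum_crossNorm_pow_four_le :
    ∑ i, ∑ j, crossNorm a i j ^ 4 ≤ 16 * ∑ i, ∑ j, a i j ^ 4 := by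
  have hpow (i j : Fin n) : crossNorm a i j ^ 4 ≤ 4 * crossMean (fun i j => a i j ^ 4) i j := by
    have h := sq_crossMean_le (u := fun i j => a i j ^ 2) i j
    rw [← sq_crossNorm] at h
    simpa only [← pow_mul] using h
  calc _ ≤ ∑ i, ∑ j, 4 * crossMean (fun i j => a i j ^ 4) i j :=
        sum_le_sum fun i _ => sum_le_sum fun j _ => hpow i j
    _ = 4 * (4 * ∑ i, ∑ j, a i j ^ 4) := by
      simp only [← mul_sum]
      exact congrArg (4 * ·) sum_sum_crossMean
    _ = _ := by ring

end CrossMean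

/-! ### Deleting one row and one column -/

section Deletion

variable {n : ℕ} {a u : Matrix (Fin n) (Fin n) ℝ} {R C : Finset (Fin n)} {i j : Fin n}

theorem minorMean_expansion₂ (h : #R = #C) (hi : i ∈ R) (hj : j ∈ C) (φ : ℝ → ℝ) (x : ℝ) :
    (#R - 1) * (#R * minorMean a R C φ x) =
      (#R - 1) * minorMean a (R.erase i) (C.erase j) φ (x + a i j) +
        ∑ k ∈ R.erase i, ∑ l ∈ C.erase j,
          minorMean a ((R.erase i).erase k) ((C.erase j).erase l) φ (x + a i l + a k j) := by
  rw [minorMean_row_expansion a C hi, ← add_sum_erase C _ hj, mul_add, mul_sum, sum_comm]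
  congr 1
  refine sum_congr rfl fun l hl => ?_
  obtain ⟨hlj, hlC⟩ := mem_erase.1 hl
  rw [← cast_card_erase_of_mem hi, minorMean_col_expansion a _ (mem_erase.2 ⟨hlj.symm, hj⟩)]
  · simp only [erase_right_comm (a := l)]
  · rw [card_erase_of_mem hi, card_erase_of_mem hlC, h]

theorem minorMean_erase_expansion (hi : i ∈ R) (φ : ℝ → ℝ) (x : ℝ) :
    (#R - 1) * ((#R - 1) * minorMean a (R.erase i) (C.erase j) φ x) =
      ∑ k ∈ R.erase i, ∑ l ∈ C.erase j,
        minorMean a ((R.erase i).erase k) ((C.erase j).erase l) φ (x + a k l) := by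
  rw [← cast_card_erase_of_mem hi, ← nsmul_eq_mul, ← sum_const]
  exact sum_congr rfl fun k hk => minorMean_row_expansion a _ hk φ x

theorem mul_minorMean_sub_minorMean_erase (h : #R = #C) (hi : i ∈ R) (hj : j ∈ C) (φ : ℝ → ℝ)
    (x : ℝ) :
    #R * (#R - 1) * (minorMean a R C φ x - minorMean a (R.erase i) (C.erase j) φ x) =
      (#R - 1) * (minorMean a (R.erase i) (C.erase j) φ (x + a i j) -
        minorMean a (R.erase i) (C.erase j) φ x) +
      ∑ k ∈ R.erase i, ∑ l ∈ C.erase j,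
        (minorMean a ((R.erase i).erase k) ((C.erase j).erase l) φ (x + a i l + a k j) -
          minorMean a ((R.erase i).erase k) ((C.erase j).erase l) φ (x + a k l)) := by
  simp only [sum_sub_distrib]
  linear_combination minorMean_expansion₂ h hi hj φ x -
    minorMean_erase_expansion (a := a) (C := C) (j := j) hi φ x

theorem sum_sum_le_of_lineMeansLE (hu : ∀ i j, 0 ≤ u i j) {W m : ℝ} (hW : LineMeansLE u i j W)
    (hn : n ≤ 2 * m) (hR : #R = m) (hC : #C = m) :
    ∑ k ∈ R, ∑ l ∈ C, (u i l + u k j + u k l) ≤ m ^ 2 * (8 * W) := by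
  have hn0 : (0 : ℝ) < n := Nat.cast_pos.2 i.pos
  have hW0 : 0 ≤ W := nonneg_of_mul_nonneg_right ((sum_nonneg fun l _ => hu i l).trans hW.row) hn0
  have hrow : ∑ l ∈ C, u i l ≤ 2 * m * W :=
    (sum_le_univ_sum_of_nonneg fun l => hu i l).trans (hW.row.trans (by gcongr))
  have hcol : ∑ k ∈ R, u k j ≤ 2 * m * W :=
    (sum_le_univ_sum_of_nonneg fun k => hu k j).trans (hW.col.trans (by gcongr))
  have htotal : ∑ k ∈ R, ∑ l ∈ C, u k l ≤ (2 * m) ^ 2 * W :=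
    calc _ ≤ ∑ k ∈ R, ∑ l, u k l := sum_le_sum fun k _ => sum_le_univ_sum_of_nonneg (hu k)
      _ ≤ ∑ k, ∑ l, u k l := sum_le_univ_sum_of_nonneg fun k => sum_nonneg fun l _ => hu k l
      _ ≤ n ^ 2 * W := hW.total
      _ ≤ _ := by gcongr
  have hm : 0 ≤ m := by linarith
  simp only [sum_add_distrib, sum_const, nsmul_eq_mul, hR, hC, ← mul_sum]
  linarith [mul_le_mul_of_nonneg_left hrow hm, mul_le_mul_of_nonneg_left hcol hm]

theorem abs_sum_sum_le_of_lineMeansLE {F : Fin n → Fin n → ℝ} {K B W m : ℝ} (hK : 0 ≤ K)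
    (hu : ∀ i j, 0 ≤ u i j) (hW : LineMeansLE u i j W) (hn : n ≤ 2 * m) (hR : #R = m) (hC : #C = m)
    (hF : ∀ k ∈ R, ∀ l ∈ C, |F k l| ≤ K * (u i l + u k j + u k l + B)) :
    |∑ k ∈ R, ∑ l ∈ C, F k l| ≤ m ^ 2 * (K * (8 * W + B)) := by
  have hmean := sum_sum_le_of_lineMeansLE hu hW hn hR hC
  calc _ ≤ ∑ k ∈ R, ∑ l ∈ C, K * (u i l + u k j + u k l + B) :=
        (abs_sum_le_sum_abs _ _).trans (sum_le_sum fun k hk =>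
          (abs_sum_le_sum_abs _ _).trans (sum_le_sum fun l hl => hF k hk l hl))
    _ = K * (∑ k ∈ R, ∑ l ∈ C, (u i l + u k j + u k l) + m ^ 2 * B) := by
      simp only [← mul_sum, sum_add_distrib, sum_const, nsmul_eq_mul, hR, hC]
      ring
    _ ≤ K * (m ^ 2 * (8 * W) + m ^ 2 * B) := by gcongr
    _ = _ := by ring

theorem abs_minorMean_sub_erase_le (h : #R = #C) (hn : n + 2 ≤ 2 * #R) (hi : i ∈ R) (hj : j ∈ C)
    {φ : ℝ → ℝ} {x T K B W : ℝ} (hK : 0 ≤ K) (hB : 0 ≤ B) (hu : ∀ i j, 0 ≤ u i j)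
    (hW : LineMeansLE u i j W)
    (hT : |minorMean a (R.erase i) (C.erase j) φ (x + a i j) -
      minorMean a (R.erase i) (C.erase j) φ x| ≤ T)
    (hswap : ∀ k ∈ R.erase i, ∀ l ∈ C.erase j,
      |minorMean a ((R.erase i).erase k) ((C.erase j).erase l) φ (x + a i l + a k j) -
        minorMean a ((R.erase i).erase k) ((C.erase j).erase l) φ (x + a k l)| ≤
      K * (u i l + u k j + u k l + B)) :
    |minorMean a R C φ x - minorMean a (R.erase i) (C.erase j) φ x| ≤ T + K * (8 * W + B) := by
  have hn' : (n : ℝ) + 2 ≤ 2 * #R := by exact_mod_cast hn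
  have hn0 : (0 : ℝ) < n := Nat.cast_pos.2 i.pos
  have hR : (#(R.erase i) : ℝ) = #R - 1 := cast_card_erase_of_mem hi
  have hC : (#(C.erase j) : ℝ) = #R - 1 := by rw [cast_card_erase_of_mem hj, h]
  have hm : (0 : ℝ) < #R - 1 := by linarith
  have hsum := abs_sum_sum_le_of_lineMeansLE hK hu hW (by linarith) hR hC hswap
  have hW0 : 0 ≤ W := nonneg_of_mul_nonneg_right ((sum_nonneg fun l _ => hu i l).trans hW.row) hn0
  refine le_of_mul_le_mul_left ?_ (mul_pos (by linarith : (0 : ℝ) < #R) hm)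
  calc _ = |#R * (#R - 1) * (minorMean a R C φ x - minorMean a (R.erase i) (C.erase j) φ x)| := by
        rw [abs_mul, abs_of_pos (mul_pos (by linarith) hm)]
    _ ≤ (#R - 1) * T + (#R - 1) ^ 2 * (K * (8 * W + B)) := by
      rw [mul_minorMean_sub_minorMean_erase h hi hj]
      refine (abs_add_le _ _).trans (add_le_add ?_ hsum)
      rw [abs_mul, abs_of_pos hm]
      gcongr
    _ ≤ _ := by
      have hT0 := (abs_nonneg _).trans hT
      have : 0 ≤ K * (8 * W + B) := by positivity
      nlinarith [mul_nonneg hm.le hT0, mul_nonneg hm.le this]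

/-- The means of `f` over the submatrices of `a` with at most eight deleted rows are
`L`-Lipschitz. -/
def MinorLipschitz (a : Matrix (Fin n) (Fin n) ℝ) (f : ℝ → ℝ) (L : ℝ) : Prop :=
  ∀ R C : Finset (Fin n), #R = #C → n ≤ #R + 8 →
    ∀ x y, |minorMean a R C f x - minorMean a R C f y| ≤ L * |x - y|

theorem card_erase_eq_card_erase (h : #R = #C) (hi : i ∈ R) (hj : j ∈ C) :
    #(R.erase i) = #(C.erase j) := by
  rw [card_erase_of_mem hi, card_erase_of_mem hj, h]

theorem le_card_erase_add {d : ℕ} (hc : n ≤ #R + d) (hi : i ∈ R) : n ≤ #(R.erase i) + (d + 1) := by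
  have := card_erase_add_one hi
  lia

namespace MinorLipschitz

variable {f f' : ℝ → ℝ} {L β : ℝ}

theorem nonneg (hf : MinorLipschitz a f L) : 0 ≤ L :=
  nonneg_of_abs_sub_le (hf univ univ rfl (by simp))

theorem abs_sub_erase_le (hf : MinorLipschitz a f L) (hn : 16 ≤ n) (h : #R = #C)
    (hc : n ≤ #R + 6) (hi : i ∈ R) (hj : j ∈ C) (x : ℝ) :
    |minorMean a R C f x - minorMean a (R.erase i) (C.erase j) f x| ≤ 9 * L * crossNorm a i j := by
  have hL := hf.nonneg
  have hcard := card_erase_eq_card_erase h hi hj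
  have hc' := le_card_erase_add hc hi
  calc _ ≤ L * crossNorm a i j + L * (8 * crossNorm a i j + 0) := by
        refine abs_minorMean_sub_erase_le h (by lia) hi hj hL le_rfl
          (u := fun i j => |a i j|) (fun _ _ => abs_nonneg _) (lineMeansLE_abs i j) ?_
          fun k hk l hl => ?_
        · refine (hf _ _ hcard (hc'.trans (by lia)) _ _).trans ?_
          rw [add_sub_cancel_left]
          gcongr
          exact abs_le_crossNorm i j
        · refine (hf _ _ (card_erase_eq_card_erase hcard hk hl) (le_card_erase_add hc' hk)
            _ _).trans ?_
          gcongr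
          rw [add_assoc, add_sub_add_left_eq_sub, add_zero]
          exact (abs_sub _ _).trans (add_le_add_left (abs_add_le _ _) _)
    _ = _ := by ring

theorem abs_minorMean_sub_le (hf : MinorLipschitz a f' L) (hf' : ∀ t, HasDerivAt f (f' t) t)
    (h : #R = #C) (hc : n ≤ #R + 8) {u v c₁ c₂ c₃ b : ℝ} (hu : |u| ≤ c₁ + c₂) (hv : |v| ≤ c₃)
    (hc₁ : 0 ≤ c₁) (hc₂ : 0 ≤ c₂) (hb : 0 ≤ b) (hβ : 0 ≤ β)
    (hmean : |minorMean a R C f' 0| ≤ 9 * L * (β + b + c₃)) :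
    |minorMean a R C f u - minorMean a R C f v| ≤
      30 * L * (c₁ ^ 2 + c₂ ^ 2 + c₃ ^ 2 + (b ^ 2 + β ^ 2)) := by
  have hL := hf.nonneg
  have hc₃ := (abs_nonneg _).trans hv
  have hpoly : (c₁ + c₂ + c₃ + 9 * (β + b + c₃)) * (c₁ + c₂ + c₃) ≤
      30 * (c₁ ^ 2 + c₂ ^ 2 + c₃ ^ 2 + (b ^ 2 + β ^ 2)) := by
    nlinarith [sq_nonneg (c₁ - c₂), sq_nonneg (c₁ - c₃), sq_nonneg (c₂ - c₃), sq_nonneg (c₁ - β),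
      sq_nonneg (c₁ - b), sq_nonneg (c₂ - β), sq_nonneg (c₂ - b), sq_nonneg (c₃ - β),
      sq_nonneg (c₃ - b), sq_nonneg (β - b)]
  calc _ ≤ (L * (|u| + |v|) + 9 * L * (β + b + c₃)) * |u - v| :=
        abs_sub_le_of_lipschitz_deriv (hasDerivAt_minorMean a R C hf') (hf R C h hc) hmean
    _ ≤ (L * (c₁ + c₂ + c₃) + 9 * L * (β + b + c₃)) * (c₁ + c₂ + c₃) := by
      gcongr
      exact (abs_sub _ _).trans (add_le_add hu hv)
    _ = L * ((c₁ + c₂ + c₃ + 9 * (β + b + c₃)) * (c₁ + c₂ + c₃)) := by ring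
    _ ≤ L * (30 * (c₁ ^ 2 + c₂ ^ 2 + c₃ ^ 2 + (b ^ 2 + β ^ 2))) := by gcongr
    _ = _ := by ring

theorem abs_minorMean_erase_le (hf : MinorLipschitz a f L) (hn : 16 ≤ n) (h : #R = #C)
    (hc : n ≤ #R + 6) (hi : i ∈ R) (hj : j ∈ C) (hβ : |minorMean a R C f 0| ≤ 9 * L * β) :
    |minorMean a (R.erase i) (C.erase j) f 0| ≤ 9 * L * (β + crossNorm a i j) := by
  have hstep := hf.abs_sub_erase_le hn h hc hi hj 0
  rw [abs_sub_comm] at hstep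
  linarith [abs_sub_abs_le_abs_sub (minorMean a (R.erase i) (C.erase j) f 0)
    (minorMean a R C f 0)]

theorem abs_sub_erase_le_sq (hf : MinorLipschitz a f' L) (hf' : ∀ t, HasDerivAt f (f' t) t)
    (hn : 16 ≤ n) (h : #R = #C) (hc : n ≤ #R + 4) (hi : i ∈ R) (hj : j ∈ C) (hβ : 0 ≤ β)
    (hmean : |minorMean a R C f' 0| ≤ 9 * L * β) :
    |minorMean a R C f 0 - minorMean a (R.erase i) (C.erase j) f 0| ≤
      1050 * L * (crossNorm a i j ^ 2 + β ^ 2) := by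
  have hL := hf.nonneg
  have hcard := card_erase_eq_card_erase h hi hj
  have hc' := le_card_erase_add hc hi
  have hmean' := hf.abs_minorMean_erase_le hn h (hc.trans (by lia)) hi hj hmean
  calc _ ≤ 30 * L * (crossNorm a i j ^ 2 + 0 ^ 2 + 0 ^ 2 + (crossNorm a i j ^ 2 + β ^ 2)) +
        30 * L * (8 * (4 * crossNorm a i j ^ 2) + (crossNorm a i j ^ 2 + β ^ 2)) := by
        refine abs_minorMean_sub_erase_le h (by lia) hi hj (by positivity) (by positivity)
          (fun _ _ => sq_nonneg _) (lineMeansLE_sq_crossNorm i j) ?_ fun k hk l hl => ?_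
        · exact hf.abs_minorMean_sub_le hf' hcard (hc'.trans (by lia))
            (by simpa using abs_le_crossNorm i j) (by simp) (crossNorm_nonneg i j) le_rfl
            (crossNorm_nonneg i j) hβ (by simpa using hmean')
        · have hmean'' := hf.abs_minorMean_erase_le hn hcard (hc'.trans (by lia)) hk hl hmean'
          rw [zero_add, zero_add]
          exact hf.abs_minorMean_sub_le hf' (card_erase_eq_card_erase hcard hk hl)
            ((le_card_erase_add hc' hk).trans (by lia))
            ((abs_add_le _ _).trans (add_le_add (abs_le_crossNorm _ _) (abs_le_crossNorm _ _)))
            (abs_le_crossNorm _ _) (crossNorm_nonneg _ _) (crossNorm_nonneg _ _)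
            (crossNorm_nonneg i j) hβ hmean''
    _ ≤ _ := by
      have : 0 ≤ L * crossNorm a i j ^ 2 := by positivity
      have : 0 ≤ L * β ^ 2 := by positivity
      linarith

end MinorLipschitz

end Deletion

section MinorMeanLinear

variable {ι κ : Type*} [DecidableEq ι] [DecidableEq κ] {a : Matrix ι κ ℝ} {R : Finset ι}
  {C : Finset κ}

theorem card_equiv_coe (h : #R = #C) : Fintype.card (R ≃ C) = (#R).factorial := by
  rw [Fintype.card_equiv (Fintype.equivOfCardEq (by simpa using h)), Fintype.card_coe]

theorem minorMean_const (h : #R = #C) (c x : ℝ) : minorMean a R C (fun _ => c) x = c := by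
  have hfac : ((#R).factorial : ℝ) ≠ 0 := Nat.cast_ne_zero.2 (Nat.factorial_ne_zero _)
  unfold minorMean
  rw [sum_const, card_univ, card_equiv_coe h, nsmul_eq_mul, mul_div_cancel_left₀ _ hfac]

theorem minorMean_sub (f g : ℝ → ℝ) (x : ℝ) :
    minorMean a R C (fun t => f t - g t) x = minorMean a R C f x - minorMean a R C g x := by
  unfold minorMean
  rw [sum_sub_distrib, sub_div]

theorem minorMean_const_mul (c : ℝ) (f : ℝ → ℝ) (x : ℝ) :
    minorMean a R C (fun t => c * f t) x = c * minorMean a R C f x := by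
  unfold minorMean
  rw [← mul_sum, mul_div_assoc]

theorem card_mul_minorMean_id (h : #R = #C) :
    #R * minorMean a R C (fun t => t) 0 = ∑ i ∈ R, ∑ j ∈ C, a i j := by
  have hfac : ((#R).factorial : ℝ) ≠ 0 := Nat.cast_ne_zero.2 (Nat.factorial_ne_zero _)
  have hrow (i : R) : #R * ∑ σ : R ≃ C, a i (σ i) = (#R).factorial * ∑ j ∈ C, a i j := by
    have hcard (l : κ) (hl : l ∈ C) :
        #R * ∑ _τ : R.erase i ≃ C.erase l, a i l = (#R).factorial * a i l := by
      rw [sum_const, card_univ, card_equiv_coe (by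
        rw [card_erase_of_mem i.2, card_erase_of_mem hl, h]), card_erase_of_mem i.2, nsmul_eq_mul,
        ← mul_assoc]
      exact_mod_cast congrArg (fun k : ℕ => (k : ℝ) * a i l)
        (Nat.mul_factorial_pred (n := #R) (card_ne_zero_of_mem i.2))
    rw [sum_equiv_eq_sum_erase a C i fun l _ => a i l, mul_sum, mul_sum]
    exact sum_congr rfl hcard
  unfold minorMean
  simp only [zero_add]
  rw [sum_comm, mul_div_assoc', mul_sum, sum_congr rfl fun i _ => hrow i, ← mul_sum,
    mul_div_cancel_left₀ _ hfac, ← sum_coe_sort R]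

end MinorMeanLinear

/-! ### Deleting two rows and two columns -/

section MinorNorm

variable {n : ℕ} {a : Matrix (Fin n) (Fin n) ℝ} {f f' : ℝ → ℝ} {L P : ℝ} {i k j l : Fin n}

/-- The sum of `crossNorm a` over the entries of the `2 × 2` minor with rows `i`, `k` and columns
`j`, `l`. -/
noncomputable def minorNorm (a : Matrix (Fin n) (Fin n) ℝ) (i k j l : Fin n) : ℝ :=
  crossNorm a i j + crossNorm a i l + crossNorm a k j + crossNorm a k l

theorem minorNorm_nonneg : 0 ≤ minorNorm a i k j l := by
  unfold minorNorm
  positivity [crossNorm_nonneg (a := a) i j, crossNorm_nonneg (a := a) i l,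
    crossNorm_nonneg (a := a) k j, crossNorm_nonneg (a := a) k l]

theorem abs_add_abs_le_minorNorm :
    |a i j + a k l| + |a i l + a k j| ≤ minorNorm a i k j l := by
  unfold minorNorm
  linarith [abs_add_le (a i j) (a k l), abs_add_le (a i l) (a k j),
    abs_le_crossNorm (a := a) i j, abs_le_crossNorm (a := a) i l,
    abs_le_crossNorm (a := a) k j, abs_le_crossNorm (a := a) k l]

theorem abs_swapDiff_le : |swapDiff a i k j l| ≤ minorNorm a i k j l :=
  (abs_sub _ _).trans abs_add_abs_le_minorNorm

theorem abs_minor_sum_le : |a i j + a k l + (a i l + a k j)| ≤ minorNorm a i k j l :=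
  (abs_add_le _ _).trans abs_add_abs_le_minorNorm

theorem card_erase_erase (hik : i ≠ k) : #((univ.erase i).erase k) + 2 = n := by
  have h₁ := card_erase_add_one (mem_univ i)
  have h₂ := card_erase_add_one (mem_erase.2 ⟨hik.symm, mem_univ k⟩)
  rw [card_univ, Fintype.card_fin] at h₁
  lia

theorem card_erase_erase_eq (hik : i ≠ k) (hjl : j ≠ l) :
    #((univ.erase i).erase k) = #((univ.erase j).erase l) :=
  Nat.add_right_cancel ((card_erase_erase hik).trans (card_erase_erase hjl).symm)

theorem sum_erase_erase (hik : i ≠ k) (u : Fin n → ℝ) :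
    ∑ x ∈ (univ.erase i).erase k, u x = ∑ x, u x - u i - u k := by
  rw [sum_erase_eq_sub (mem_erase.2 ⟨hik.symm, mem_univ k⟩), sum_erase_eq_sub (mem_univ i)]

theorem mul_minorMean₂_id (hrow : ∀ i, ∑ j, a i j = 0) (hcol : ∀ j, ∑ i, a i j = 0)
    (hik : i ≠ k) (hjl : j ≠ l) :
    (n - 2) * minorMean₂ a i k j l (fun t => t) 0 = a i j + a k l + (a i l + a k j) := by
  have hcard : (#((univ.erase i).erase k) : ℝ) = n - 2 := by
    rw [eq_sub_iff_add_eq]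
    exact_mod_cast card_erase_erase hik
  have h := card_mul_minorMean_id (a := a) (card_erase_erase_eq hik hjl)
  simp only [sum_erase_erase hik, sum_erase_erase hjl, sum_sub_distrib, hrow, hcol,
    hcard, sum_const_zero] at h
  unfold minorMean₂
  linear_combination h

theorem abs_minorMean₂_id_le (hn : 4 ≤ n) (hrow : ∀ i, ∑ j, a i j = 0)
    (hcol : ∀ j, ∑ i, a i j = 0) (hik : i ≠ k) (hjl : j ≠ l) :
    |minorMean₂ a i k j l (fun t => t) 0| ≤ 2 / n * minorNorm a i k j l := by
  have hn' : (4 : ℝ) ≤ n := by exact_mod_cast hn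
  rw [div_mul_eq_mul_div, le_div_iff₀' (by linarith)]
  calc n * |minorMean₂ a i k j l (fun t => t) 0|
      ≤ 2 * (n - 2) * |minorMean₂ a i k j l (fun t => t) 0| := by gcongr; linarith
    _ = 2 * |a i j + a k l + (a i l + a k j)| := by
      rw [← mul_minorMean₂_id hrow hcol hik hjl, abs_mul,
        abs_of_pos (by linarith : (0 : ℝ) < n - 2), mul_assoc]
    _ ≤ 2 * minorNorm a i k j l := by gcongr; exact abs_minor_sum_le

namespace MinorLipschitz

theorem abs_minorMean₂_sub_le (hf : MinorLipschitz a f L) (hik : i ≠ k) (hjl : j ≠ l) (x y : ℝ) :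
    |minorMean₂ a i k j l f x - minorMean₂ a i k j l f y| ≤ L * |x - y| :=
  hf _ _ (card_erase_erase_eq hik hjl) (by have := card_erase_erase hik; lia) x y

theorem abs_minorMean₂_sub_mean_le (hf : MinorLipschitz a f L) (hn : 16 ≤ n) (hik : i ≠ k)
    (hjl : j ≠ l) :
    |minorMean₂ a i k j l f 0 - minorMean a univ univ f 0| ≤ 9 * L * minorNorm a i k j l := by
  have hL := hf.nonneg
  have hcard := card_erase_eq_card_erase (R := univ) (C := univ) rfl (mem_univ i) (mem_univ j)
  have h₁ := hf.abs_sub_erase_le hn rfl (by simp) (mem_univ i) (mem_univ j) 0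
  have h₂ := hf.abs_sub_erase_le hn hcard
    ((le_card_erase_add (d := 0) (by simp) (mem_univ i)).trans (by lia))
    (mem_erase.2 ⟨hik.symm, mem_univ k⟩) (mem_erase.2 ⟨hjl.symm, mem_univ l⟩) 0
  rw [abs_sub_comm]
  calc _ ≤ 9 * L * crossNorm a i j + 9 * L * crossNorm a k l :=
        (abs_sub_le _ _ _).trans (add_le_add h₁ h₂)
    _ = 9 * L * (crossNorm a i j + 0 + 0 + crossNorm a k l) := by ring
    _ ≤ _ := by unfold minorNorm; gcongr <;> exact crossNorm_nonneg _ _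

theorem abs_minorMean₂_sub_mean_le_sq_of_mean_eq_zero (hf : MinorLipschitz a f' L)
    (hf' : ∀ t, HasDerivAt f (f' t) t) (hmean : minorMean a univ univ f' 0 = 0) (hn : 16 ≤ n)
    (hik : i ≠ k) (hjl : j ≠ l) :
    |minorMean₂ a i k j l f 0 - minorMean a univ univ f 0| ≤
      2100 * L * minorNorm a i k j l ^ 2 := by
  have hL := hf.nonneg
  have hcard := card_erase_eq_card_erase (R := univ) (C := univ) rfl (mem_univ i) (mem_univ j)
  have hmean₀ : |minorMean a univ univ f' 0| ≤ 9 * L * 0 := by simp [hmean]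
  have hmean₁ := hf.abs_minorMean_erase_le hn rfl (by simp) (mem_univ i) (mem_univ j) hmean₀
  rw [zero_add] at hmean₁
  have h₁ := hf.abs_sub_erase_le_sq hf' hn rfl (by simp) (mem_univ i) (mem_univ j) le_rfl hmean₀
  have h₂ := hf.abs_sub_erase_le_sq hf' hn hcard
    ((le_card_erase_add (d := 0) (by simp) (mem_univ i)).trans (by lia))
    (mem_erase.2 ⟨hik.symm, mem_univ k⟩) (mem_erase.2 ⟨hjl.symm, mem_univ l⟩)
    (crossNorm_nonneg i j) hmean₁
  have hsq : crossNorm a i j ^ 2 + 0 ^ 2 + (crossNorm a k l ^ 2 + crossNorm a i j ^ 2) ≤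
      2 * minorNorm a i k j l ^ 2 := by
    have hij : crossNorm a i j + 0 + 0 + crossNorm a k l ≤ minorNorm a i k j l := by
      unfold minorNorm; gcongr <;> exact crossNorm_nonneg _ _
    have hnonneg := mul_nonneg (crossNorm_nonneg (a := a) i j) (crossNorm_nonneg (a := a) k l)
    nlinarith [pow_le_pow_left₀ (add_nonneg (by simpa using crossNorm_nonneg i j)
      (crossNorm_nonneg k l)) hij 2, sq_nonneg (crossNorm a k l)]
  rw [abs_sub_comm]
  calc _ ≤ 1050 * L * (crossNorm a i j ^ 2 + 0 ^ 2) +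
        1050 * L * (crossNorm a k l ^ 2 + crossNorm a i j ^ 2) :=
        (abs_sub_le _ _ _).trans (add_le_add h₁ h₂)
    _ = 1050 * L * (crossNorm a i j ^ 2 + 0 ^ 2 + (crossNorm a k l ^ 2 + crossNorm a i j ^ 2)) := by
      ring
    _ ≤ 1050 * L * (2 * minorNorm a i k j l ^ 2) := by gcongr
    _ = _ := by ring

theorem sub_const (hf : MinorLipschitz a f L) (p : ℝ) : MinorLipschitz a (fun t => f t - p) L := by
  intro R C h hc x y
  simpa only [minorMean_sub, minorMean_const h, sub_sub_sub_cancel_right] using hf R C h hc x y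

theorem abs_minorMean₂_sub_mean_le_sq (hf : MinorLipschitz a f' L)
    (hf' : ∀ t, HasDerivAt f (f' t) t) (hrow : ∀ i, ∑ j, a i j = 0) (hcol : ∀ j, ∑ i, a i j = 0)
    (hP : |minorMean a univ univ f' 0| ≤ P) (hn : 16 ≤ n) (hik : i ≠ k) (hjl : j ≠ l) :
    |minorMean₂ a i k j l f 0 - minorMean a univ univ f 0| ≤
      2100 * L * minorNorm a i k j l ^ 2 + 2 * P / n * minorNorm a i k j l := by
  set p := minorMean a univ univ f' 0
  have hmain := (hf.sub_const p).abs_minorMean₂_sub_mean_le_sq_of_mean_eq_zero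
    (f := fun t => f t - p * t)
    (fun t => (hf' t).fun_sub (by simpa using (hasDerivAt_id t).const_mul p))
    (by rw [minorMean_sub, minorMean_const rfl, sub_self]) hn hik hjl
  have hmean : minorMean a univ univ (fun t => t) 0 = 0 := by
    have h := card_mul_minorMean_id (a := a) (R := univ) (C := univ) rfl
    simp only [hrow, sum_const_zero, card_univ, Fintype.card_fin, mul_eq_zero, Nat.cast_eq_zero]
      at h
    exact h.resolve_left (by lia)
  have hdrift : |p * minorMean₂ a i k j l (fun t => t) 0| ≤ P * (2 / n * minorNorm a i k j l) := by
    rw [abs_mul]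
    have hP0 := (abs_nonneg p).trans hP
    have := abs_minorMean₂_id_le (by lia) hrow hcol hik hjl
    gcongr
  rw [minorMean₂, minorMean_sub, minorMean_sub, minorMean_const_mul p fun t => t,
    minorMean_const_mul p fun t => t, hmean, mul_zero, sub_zero] at hmain
  calc _ = |(minorMean₂ a i k j l f 0 - p * minorMean₂ a i k j l (fun t => t) 0 -
          minorMean a univ univ f 0) + p * minorMean₂ a i k j l (fun t => t) 0| := by
        congr 1; ring
    _ ≤ 2100 * L * minorNorm a i k j l ^ 2 + P * (2 / n * minorNorm a i k j l) :=
        (abs_add_le _ _).trans (add_le_add hmain hdrift)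
    _ = _ := by ring

end MinorLipschitz

end MinorNorm

/-! ### Moments of the swap differences -/

section SwapMoments

variable {n : ℕ} {a : Matrix (Fin n) (Fin n) ℝ} {D : ℝ}

/-- The matrices to which Stein's method applies: all row and column sums vanish, and the
normalization makes the rank statistic have variance one. -/
structure IsStandardized (a : Matrix (Fin n) (Fin n) ℝ) : Prop where
  row_sum (i : Fin n) : ∑ j, a i j = 0
  col_sum (j : Fin n) : ∑ i, a i j = 0
  sum_sq : ∑ i, ∑ j, a i j ^ 2 = n - 1

theorem sum_sum_sq_sub_mul_add {u v : Fin n → ℝ} (hu : ∑ i, u i = 0) (hv : ∑ i, v i = 0) :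
    ∑ j, ∑ l, (u j - u l) ^ 2 * (v j + v l) = 2 * n * ∑ j, u j ^ 2 * v j := by
  have hexpand (j l : Fin n) : (u j - u l) ^ 2 * (v j + v l) = u j ^ 2 * v j + u j ^ 2 * v l -
      2 * (u j * v j) * u l - 2 * u j * (u l * v l) + v j * u l ^ 2 + u l ^ 2 * v l := by ring
  have hswap (j : Fin n) : n * (u j ^ 2 * v j) = u j ^ 2 * (n * v j) := mul_left_comm _ _ _
  simp only [hexpand, sum_add_distrib, sum_sub_distrib, ← mul_sum, ← sum_mul, hu, hv, sum_const,
    card_univ, Fintype.card_fin, nsmul_eq_mul]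
  rw [← sum_congr rfl fun j _ => hswap j, ← mul_sum]
  ring

theorem sum_sum_sq_sub {u : Fin n → ℝ} (hu : ∑ i, u i = 0) :
    ∑ j, ∑ l, (u j - u l) ^ 2 = 2 * n * ∑ j, u j ^ 2 := by
  have hexpand (j l : Fin n) : (u j - u l) ^ 2 = u j ^ 2 - 2 * u j * u l + u l ^ 2 := by ring
  simp only [hexpand, sum_add_distrib, sum_sub_distrib, ← mul_sum, ← sum_mul, hu, sum_const,
    card_univ, Fintype.card_fin, nsmul_eq_mul]
  ring

theorem IsStandardized.sum_swapDiff_sq (ha : IsStandardized a) :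
    ∑ i, ∑ k, ∑ j, ∑ l, swapDiff a i k j l ^ 2 = 4 * n ^ 2 * (n - 1) := by
  have hrows (i k : Fin n) :
      ∑ j, ∑ l, swapDiff a i k j l ^ 2 = 2 * n * ∑ j, (a i j - a k j) ^ 2 := by
    rw [← sum_sum_sq_sub (by rw [sum_sub_distrib, ha.row_sum, ha.row_sum, sub_zero])]
    exact sum_congr rfl fun j _ => sum_congr rfl fun l _ => by unfold swapDiff; ring
  simp only [hrows, ← mul_sum]
  rw [sum_congr rfl fun i _ => sum_comm, sum_comm,
    sum_congr rfl fun j _ => sum_sum_sq_sub (ha.col_sum j), ← mul_sum, sum_comm, ha.sum_sq]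
  ring

theorem IsStandardized.sum_swapDiff_sq_mul (ha : IsStandardized a) :
    ∑ i, ∑ k, ∑ j, ∑ l, swapDiff a i k j l ^ 2 * (a i j + a k l + (a i l + a k j)) =
      4 * n ^ 2 * ∑ i, ∑ j, a i j ^ 3 := by
  have hrows (i k : Fin n) :
      ∑ j, ∑ l, swapDiff a i k j l ^ 2 * (a i j + a k l + (a i l + a k j)) =
        2 * n * ∑ j, (a i j - a k j) ^ 2 * (a i j + a k j) := by
    rw [← sum_sum_sq_sub_mul_add (by rw [sum_sub_distrib, ha.row_sum, ha.row_sum, sub_zero])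
      (by rw [sum_add_distrib, ha.row_sum, ha.row_sum, add_zero])]
    exact sum_congr rfl fun j _ => sum_congr rfl fun l _ => by unfold swapDiff; ring
  simp only [hrows, ← mul_sum]
  rw [sum_congr rfl fun i _ => sum_comm, sum_comm,
    sum_congr rfl fun j _ => sum_sum_sq_sub_mul_add (ha.col_sum j) (ha.col_sum j), ← mul_sum,
    sum_comm]
  simp only [← pow_succ]
  ring

theorem sq_sum_sum_pow_three_le (w : Fin n → Fin n → ℝ) :
    (∑ i, ∑ j, w i j ^ 3) ^ 2 ≤ (∑ i, ∑ j, w i j ^ 2) * ∑ i, ∑ j, w i j ^ 4 := by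
  have h := sum_mul_sq_le_sq_mul_sq (univ : Finset (Fin n × Fin n)) (fun p => w p.1 p.2)
    (fun p => w p.1 p.2 ^ 2)
  simpa only [Fintype.sum_prod_type, ← pow_succ', ← pow_mul] using h

theorem IsStandardized.size_pos (ha : IsStandardized a) : 0 < (n : ℝ) := by
  rcases n.eq_zero_or_pos with rfl | hn
  · simpa using ha.sum_sq
  · exact_mod_cast hn

theorem IsStandardized.abs_le_of_sum_pow_three_eq (ha : IsStandardized a)
    (hD : ∑ i, ∑ j, a i j ^ 4 = n * D ^ 2) (hD0 : 0 ≤ D) {lam : ℝ}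
    (hlam : ∑ i, ∑ j, a i j ^ 3 = n * lam) : |lam| ≤ D := by
  have h := sq_sum_sum_pow_three_le a
  rw [ha.sum_sq, hD, hlam] at h
  refine abs_le_of_sq_le_sq (le_of_mul_le_mul_left ?_ (pow_pos ha.size_pos 2)) hD0
  nlinarith [mul_nonneg ha.size_pos.le (sq_nonneg D)]

theorem IsStandardized.sum_crossNorm_pow_three_le (ha : IsStandardized a)
    (hD : ∑ i, ∑ j, a i j ^ 4 = n * D ^ 2) (hD0 : 0 ≤ D) :
    ∑ i, ∑ j, crossNorm a i j ^ 3 ≤ 8 * (n * D) := by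
  refine le_of_sq_le_sq ((sq_sum_sum_pow_three_le _).trans ?_) (by positivity)
  have h4 := sum_sum_crossNorm_pow_four_le (a := a)
  rw [hD] at h4
  calc _ ≤ (4 * n : ℝ) * (16 * (n * D ^ 2)) := by
        rw [sum_sum_crossNorm_sq, ha.sum_sq]
        gcongr
        linarith
    _ = _ := by ring

theorem sum_minorNorm_pow_le (p : ℕ) :
    ∑ i, ∑ k, ∑ j, ∑ l, minorNorm a i k j l ^ p ≤
      4 ^ (p - 1) * (4 * n ^ 2 * ∑ i, ∑ j, crossNorm a i j ^ p) := by
  have hpow (i k j l : Fin n) : minorNorm a i k j l ^ p ≤ 4 ^ (p - 1) * (crossNorm a i j ^ p +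
      crossNorm a i l ^ p + crossNorm a k j ^ p + crossNorm a k l ^ p) := by
    have h (i j : Fin n) := crossNorm_nonneg (a := a) i j
    calc minorNorm a i k j l ^ p
        = ((crossNorm a i j + crossNorm a i l) + (crossNorm a k j + crossNorm a k l)) ^ p := by
          rw [minorNorm, add_assoc (_ + _)]
      _ ≤ 2 ^ (p - 1) * (2 ^ (p - 1) * (crossNorm a i j ^ p + crossNorm a i l ^ p) +
            2 ^ (p - 1) * (crossNorm a k j ^ p + crossNorm a k l ^ p)) := by
          refine (add_pow_le (add_nonneg (h i j) (h i l)) (add_nonneg (h k j) (h k l)) p).trans ?_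
          gcongr <;> exact add_pow_le (h _ _) (h _ _) p
      _ = _ := by
          rw [show (4 : ℝ) = 2 * 2 by norm_num, mul_pow]
          ring
  calc _ ≤ _ := sum_le_sum fun i _ => sum_le_sum fun k _ => sum_le_sum fun j _ =>
        sum_le_sum fun l _ => hpow i k j l
    _ = _ := by
        simp only [← mul_sum, sum_add_distrib, sum_const, card_univ, Fintype.card_fin,
          nsmul_eq_mul]
        ring

theorem IsStandardized.sum_minorNorm_pow_three_le (ha : IsStandardized a)
    (hD : ∑ i, ∑ j, a i j ^ 4 = n * D ^ 2) (hD0 : 0 ≤ D) :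
    ∑ i, ∑ k, ∑ j, ∑ l, minorNorm a i k j l ^ 3 ≤ 512 * (n ^ 3 * D) :=
  calc _ ≤ 4 ^ (3 - 1) * (4 * n ^ 2 * ∑ i, ∑ j, crossNorm a i j ^ 3) := sum_minorNorm_pow_le 3
    _ ≤ 4 ^ (3 - 1) * (4 * n ^ 2 * (8 * (n * D))) := by
      gcongr; exact ha.sum_crossNorm_pow_three_le hD hD0
    _ = _ := by ring

theorem sum_minorNorm_pow_four_le (hD : ∑ i, ∑ j, a i j ^ 4 = n * D ^ 2) :
    ∑ i, ∑ k, ∑ j, ∑ l, minorNorm a i k j l ^ 4 ≤ 4096 * (n ^ 3 * D ^ 2) :=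
  calc _ ≤ 4 ^ (4 - 1) * (4 * n ^ 2 * ∑ i, ∑ j, crossNorm a i j ^ 4) := sum_minorNorm_pow_le 4
    _ ≤ 4 ^ (4 - 1) * (4 * n ^ 2 * (16 * (n * D ^ 2))) := by
      gcongr; exact hD ▸ sum_sum_crossNorm_pow_four_le
    _ = _ := by ring

end SwapMoments

/-! ### Remainders in the Stein identity -/

section SteinRemainder

variable {n : ℕ} {a : Matrix (Fin n) (Fin n) ℝ} {f f' f'' : ℝ → ℝ} {L P D lam : ℝ}

theorem hasDerivAt_minorMean₂ (hf : ∀ t, HasDerivAt f (f' t) t) (i k j l : Fin n) (x : ℝ) :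
    HasDerivAt (minorMean₂ a i k j l f) (minorMean₂ a i k j l f' x) x :=
  hasDerivAt_minorMean a _ _ hf x

theorem abs_swap_remainder_le (hn : 16 ≤ n) (hf : ∀ t, HasDerivAt f (f' t) t)
    (hf' : MinorLipschitz a f' L) (i k j l : Fin n) :
    |swapDiff a i k j l * (minorMean₂ a i k j l f (a i j + a k l) -
        minorMean₂ a i k j l f (a i l + a k j)) -
      swapDiff a i k j l ^ 2 * minorMean a univ univ f' 0| ≤ 10 * L * minorNorm a i k j l ^ 3 := by
  have hL := hf'.nonneg
  have hs := minorNorm_nonneg (a := a) (i := i) (k := k) (j := j) (l := l)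
  by_cases hd0 : swapDiff a i k j l = 0
  · simpa [hd0] using (by positivity : 0 ≤ 10 * L * minorNorm a i k j l ^ 3)
  have hik : i ≠ k := by rintro rfl; exact hd0 (swapDiff_self_left i j l)
  have hjl : j ≠ l := by rintro rfl; exact hd0 (swapDiff_self_right i k j)
  have hmean := hf'.abs_minorMean₂_sub_mean_le hn hik hjl
  have htaylor := abs_sub_sub_mul_le_of_lipschitz_deriv (u := a i j + a k l) (v := a i l + a k j)
    (hasDerivAt_minorMean₂ hf i k j l) (hf'.abs_minorMean₂_sub_le hik hjl)
  rw [show a i j + a k l - (a i l + a k j) = swapDiff a i k j l from rfl] at htaylor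
  have hd := abs_swapDiff_le (a := a) (i := i) (k := k) (j := j) (l := l)
  have hsum := abs_add_abs_le_minorNorm (a := a) (i := i) (k := k) (j := j) (l := l)
  set d := swapDiff a i k j l
  set s := minorNorm a i k j l
  set g := minorMean₂ a i k j l f
  set g₁ := minorMean₂ a i k j l f' 0
  set q := minorMean a univ univ f' 0
  set u := a i j + a k l
  set v := a i l + a k j
  calc |d * (g u - g v) - d ^ 2 * q| = |d * (g u - g v - d * g₁) + d ^ 2 * (g₁ - q)| := by
        congr 1; ring
    _ ≤ |d| * |g u - g v - d * g₁| + |d| ^ 2 * |g₁ - q| := by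
        refine (abs_add_le _ _).trans_eq ?_
        rw [abs_mul, abs_mul, abs_pow]
    _ ≤ s * (L * s * s) + s ^ 2 * (9 * L * s) := by
        have := htaylor.trans (by gcongr : L * (|u| + |v|) * |d| ≤ L * s * s)
        gcongr
    _ = _ := by ring

theorem abs_mul_sub_sub_le_of_abs_le {d s y g g₁ g₂ q p E₀ E₁ E₂ : ℝ} (hd : |d| ≤ s) (hy : |y| ≤ s)
    (h₀ : |g - d * g₁ - y * d / 2 * g₂| ≤ E₀) (h₁ : |g₁ - q| ≤ E₁) (h₂ : |g₂ - p| ≤ E₂) :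
    |d * g - d ^ 2 * q - d ^ 2 * y * (p / 2)| ≤
      s * E₀ + s ^ 2 * E₁ + s ^ 2 * (s * (E₂ * (1 / 2))) :=
  have hs : 0 ≤ s := (abs_nonneg _).trans hd
  calc _ = |d * (g - d * g₁ - y * d / 2 * g₂) + d ^ 2 * (g₁ - q) +
          d ^ 2 * (y * ((g₂ - p) * (1 / 2)))| := by congr 1; ring
    _ ≤ |d| * |g - d * g₁ - y * d / 2 * g₂| + |d| ^ 2 * |g₁ - q| +
          |d| ^ 2 * (|y| * (|g₂ - p| * (1 / 2))) := by
        refine (abs_add_three _ _ _).trans_eq ?_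
        simp only [abs_mul, abs_pow, abs_of_pos (one_half_pos (α := ℝ))]
    _ ≤ _ := by gcongr

theorem IsStandardized.abs_swap_remainder_le₂ (ha : IsStandardized a) (hn : 16 ≤ n)
    (hf : ∀ t, HasDerivAt f (f' t) t) (hf' : ∀ t, HasDerivAt f' (f'' t) t)
    (hf'' : MinorLipschitz a f'' L) (hP : |minorMean a univ univ f'' 0| ≤ P) (i k j l : Fin n) :
    |swapDiff a i k j l * (minorMean₂ a i k j l f (a i j + a k l) -
        minorMean₂ a i k j l f (a i l + a k j)) -
      swapDiff a i k j l ^ 2 * minorMean a univ univ f' 0 -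
      swapDiff a i k j l ^ 2 * (a i j + a k l + (a i l + a k j)) *
        (minorMean a univ univ f'' 0 / 2)| ≤
      2110 * L * minorNorm a i k j l ^ 4 + 2 * P / n * minorNorm a i k j l ^ 3 := by
  have hL := hf''.nonneg
  have hP0 := (abs_nonneg _).trans hP
  have hs := minorNorm_nonneg (a := a) (i := i) (k := k) (j := j) (l := l)
  by_cases hd0 : swapDiff a i k j l = 0
  · simpa [hd0] using (by positivity :
      0 ≤ 2110 * L * minorNorm a i k j l ^ 4 + 2 * P / n * minorNorm a i k j l ^ 3)
  have hik : i ≠ k := by rintro rfl; exact hd0 (swapDiff_self_left i j l)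
  have hjl : j ≠ l := by rintro rfl; exact hd0 (swapDiff_self_right i k j)
  have hmean := hf''.abs_minorMean₂_sub_mean_le_sq hf' ha.row_sum ha.col_sum hP hn hik hjl
  have hmean' := hf''.abs_minorMean₂_sub_mean_le hn hik hjl
  have htaylor := abs_sub_sub_sub_le_of_lipschitz_deriv₂ (u := a i j + a k l) (v := a i l + a k j)
    (hasDerivAt_minorMean₂ hf i k j l) (hasDerivAt_minorMean₂ hf' i k j l)
    (hf''.abs_minorMean₂_sub_le hik hjl)
  have hsum := abs_add_abs_le_minorNorm (a := a) (i := i) (k := k) (j := j) (l := l)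
  rw [sq_sub_sq, show a i j + a k l - (a i l + a k j) = swapDiff a i k j l from rfl] at htaylor
  replace htaylor := htaylor.trans (by gcongr; exact abs_swapDiff_le :
    _ ≤ L * minorNorm a i k j l ^ 2 * minorNorm a i k j l)
  calc _ ≤ _ := abs_mul_sub_sub_le_of_abs_le abs_swapDiff_le abs_minor_sum_le htaylor hmean hmean'
    _ = 2105.5 * L * minorNorm a i k j l ^ 4 + 2 * P / n * minorNorm a i k j l ^ 3 := by ring
    _ ≤ _ := by gcongr; norm_num

theorem abs_sum_sum_sum_sum_le {F G : Fin n → Fin n → Fin n → Fin n → ℝ}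
    (h : ∀ i k j l, |F i k j l| ≤ G i k j l) :
    |∑ i, ∑ k, ∑ j, ∑ l, F i k j l| ≤ ∑ i, ∑ k, ∑ j, ∑ l, G i k j l := by
  simp only [← Real.norm_eq_abs] at h ⊢
  exact norm_sum_le_of_le _ fun i _ => norm_sum_le_of_le _ fun k _ => norm_sum_le_of_le _ fun j _ =>
    norm_sum_le_of_le _ fun l _ => h i k j l

theorem permExp_rankT_eq_minorMean (φ : ℝ → ℝ) :
    permExp (fun π => φ (rankT a π)) = minorMean a univ univ φ 0 := by
  simp only [minorMean_univ, zero_add]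

theorem le_of_mul_sub_one_mul_le (hn : 2 ≤ n) {x y : ℝ} (hx : 0 ≤ x)
    (h : 4 * (n : ℝ) ^ 2 * (n - 1) * x ≤ 2 * n ^ 3 * y) : x ≤ y := by
  have hn' : (2 : ℝ) ≤ n := by exact_mod_cast hn
  refine le_of_mul_le_mul_left (a := 2 * (n : ℝ) ^ 3) (le_trans ?_ h) (by positivity)
  refine mul_le_mul_of_nonneg_right ?_ hx
  nlinarith [mul_nonneg (sq_nonneg (n : ℝ)) (sub_nonneg.2 hn')]

theorem IsStandardized.abs_stein_remainder_le (ha : IsStandardized a) (hn : 16 ≤ n)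
    (hD : ∑ i, ∑ j, a i j ^ 4 = n * D ^ 2) (hD0 : 0 ≤ D) (hf : ∀ t, HasDerivAt f (f' t) t)
    (hf' : MinorLipschitz a f' L) :
    |permExp (fun π => rankT a π * f (rankT a π)) - permExp (fun π => f' (rankT a π))| ≤
      2560 * L * D := by
  have hL := hf'.nonneg
  have hn1 : (0 : ℝ) ≤ n - 1 := by
    rw [sub_nonneg]; exact_mod_cast (by lia : 1 ≤ n)
  have hbound := abs_sum_sum_sum_sum_le (abs_swap_remainder_le hn hf hf')
  simp only [sum_sub_distrib (s := (univ : Finset (Fin n))), ← mul_sum, ← sum_mul] at hbound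
  rw [← stein_identity ha.col_sum, ha.sum_swapDiff_sq, ← permExp_rankT_eq_minorMean, ← mul_sub,
    abs_mul, abs_of_nonneg (by positivity)] at hbound
  refine le_of_mul_sub_one_mul_le (n := n) (by lia) (abs_nonneg _) ?_
  calc _ ≤ 10 * L * (512 * ((n : ℝ) ^ 3 * D)) :=
        hbound.trans (by gcongr; exact ha.sum_minorNorm_pow_three_le hD hD0)
    _ = 2 * n ^ 3 * (2560 * L * D) := by ring

theorem IsStandardized.abs_sum_swap_remainder_le₂ (ha : IsStandardized a) (hn : 16 ≤ n)
    (hD : ∑ i, ∑ j, a i j ^ 4 = n * D ^ 2) (hD0 : 0 ≤ D) (hlam : ∑ i, ∑ j, a i j ^ 3 = n * lam)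
    (hf : ∀ t, HasDerivAt f (f' t) t) (hf' : ∀ t, HasDerivAt f' (f'' t) t)
    (hf'' : MinorLipschitz a f'' L) (hP : |permExp fun π => f'' (rankT a π)| ≤ P) :
    |4 * n ^ 2 * (n - 1) * permExp (fun π => rankT a π * f (rankT a π)) -
        4 * n ^ 2 * (n - 1) * permExp (fun π => f' (rankT a π)) -
        4 * n ^ 2 * (n * lam) * (permExp (fun π => f'' (rankT a π)) / 2)| ≤
      2110 * L * (4096 * (n ^ 3 * D ^ 2)) + 2 * P / n * (512 * (n ^ 3 * D)) := by
  have hL := hf''.nonneg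
  have hP0 := (abs_nonneg _).trans hP
  rw [permExp_rankT_eq_minorMean] at hP
  have hbound := abs_sum_sum_sum_sum_le (ha.abs_swap_remainder_le₂ hn hf hf' hf'' hP)
  simp only [sum_sub_distrib (s := (univ : Finset (Fin n))), sum_add_distrib, ← mul_sum,
    ← sum_mul] at hbound
  rw [← stein_identity ha.col_sum, ha.sum_swapDiff_sq, ha.sum_swapDiff_sq_mul, hlam,
    ← permExp_rankT_eq_minorMean, ← permExp_rankT_eq_minorMean] at hbound
  refine hbound.trans ?_
  gcongr
  · exact sum_minorNorm_pow_four_le hD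
  · exact ha.sum_minorNorm_pow_three_le hD hD0

theorem IsStandardized.abs_stein_remainder_le₂ (ha : IsStandardized a) (hn : 16 ≤ n)
    (hD : ∑ i, ∑ j, a i j ^ 4 = n * D ^ 2) (hD0 : 0 ≤ D) (hlam : ∑ i, ∑ j, a i j ^ 3 = n * lam)
    (hf : ∀ t, HasDerivAt f (f' t) t) (hf' : ∀ t, HasDerivAt f' (f'' t) t)
    (hf'' : MinorLipschitz a f'' L) (hP : |permExp fun π => f'' (rankT a π)| ≤ P) :
    |permExp (fun π => rankT a π * f (rankT a π)) - permExp (fun π => f' (rankT a π)) -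
        lam / 2 * permExp (fun π => f'' (rankT a π))| ≤
      4400000 * L * D ^ 2 + 520 * (P * D / n) := by
  have hL := hf''.nonneg
  have hn' : (16 : ℝ) ≤ n := by exact_mod_cast hn
  have hn1 : (0 : ℝ) ≤ n - 1 := by linarith
  have hP0 := (abs_nonneg _).trans hP
  have hbound := ha.abs_sum_swap_remainder_le₂ hn hD hD0 hlam hf hf' hf'' hP
  have hlamD := ha.abs_le_of_sum_pow_three_eq hD hD0 hlam
  set E := permExp fun π => rankT a π * f (rankT a π)
  set q := permExp fun π => f' (rankT a π)
  set p := permExp fun π => f'' (rankT a π)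
  refine le_of_mul_sub_one_mul_le (n := n) (by lia) (abs_nonneg _) ?_
  calc 4 * (n : ℝ) ^ 2 * (n - 1) * |E - q - lam / 2 * p|
      = |4 * n ^ 2 * (n - 1) * (E - q - lam / 2 * p)| := by
        rw [abs_mul, abs_of_nonneg (by positivity : 0 ≤ 4 * (n : ℝ) ^ 2 * (n - 1))]
    _ = |4 * n ^ 2 * (n - 1) * E - 4 * n ^ 2 * (n - 1) * q - 4 * n ^ 2 * (n * lam) * (p / 2) +
          2 * n ^ 2 * (lam * p)| := by congr 1; ring
    _ ≤ 2110 * L * (4096 * (n ^ 3 * D ^ 2)) + 2 * P / n * (512 * (n ^ 3 * D)) +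
          2 * n ^ 2 * (D * P) := by
        refine (abs_add_le _ _).trans (add_le_add hbound ?_)
        rw [abs_mul, abs_mul lam, abs_of_nonneg (by positivity : (0 : ℝ) ≤ 2 * n ^ 2)]
        gcongr
    _ = 2 * n ^ 3 * (4321280 * L * D ^ 2 + 513 * (P * D / n)) := by field_simp; ring
    _ ≤ _ := by gcongr <;> norm_num

end SteinRemainder

/-! ### Second differences and truncated powers -/

/-- The symmetric second difference `f (x + y) - 2 f x + f (x - y)`; in terms of forward
differences it is `Δ_y² f (x - y)`. -/
def secondDiff (y : ℝ) (f : ℝ → ℝ) (x : ℝ) : ℝ := f (x + y) - 2 * f x + f (x - y)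

theorem Δiter_two_sub (y : ℝ) (f : ℝ → ℝ) (x : ℝ) : Δiter y 2 f (x - y) = secondDiff y f x := by
  simp only [Δiter, Function.iterate_succ, Function.iterate_zero, Function.comp_apply, id_eq,
    sub_add_cancel, secondDiff]
  ring

theorem hasDerivAt_secondDiff {f f' : ℝ → ℝ} (hf : ∀ t, HasDerivAt f (f' t) t) (y x : ℝ) :
    HasDerivAt (secondDiff y f) (secondDiff y f' x) x :=
  (((hf _).comp_add_const x y).sub ((hf x).const_mul 2)).add ((hf _).comp_sub_const x y)

section Primitive

variable {F S Q : ℝ → ℝ} {C D : ℝ}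

theorem abs_add_sub_sub_two_mul_le (hF : ∀ s t, IntervalIntegrable F volume s t)
    (hS : ∀ s t, ∫ x in s..t, F x = S t - S s) {z : ℝ}
    (hC : ∀ y, 0 ≤ y → y ≤ D → |secondDiff y F z| ≤ C) {v : ℝ} (hv : 0 ≤ v) (hvD : v ≤ D) :
    |S (z + v) - S (z - v) - 2 * v * F z| ≤ C * v := by
  have hadd : IntervalIntegrable (fun y => F (z + y)) volume 0 v := by
    simpa using (hF (z + 0) (z + v)).comp_add_left z
  have hsub : IntervalIntegrable (fun y => F (z - y)) volume 0 v := by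
    simpa using (hF (z - 0) (z - v)).comp_sub_left z
  have hint : ∫ y in 0..v, secondDiff y F z = S (z + v) - S (z - v) - 2 * v * F z := by
    unfold secondDiff
    rw [intervalIntegral.integral_add (hadd.sub intervalIntegrable_const) hsub,
      intervalIntegral.integral_sub hadd intervalIntegrable_const,
      intervalIntegral.integral_comp_add_left, intervalIntegral.integral_comp_sub_left,
      intervalIntegral.integral_const, hS, hS, smul_eq_mul]
    simp only [add_zero, sub_zero]
    ring
  rw [← hint]
  calc |∫ y in 0..v, secondDiff y F z| ≤ C * |v - 0| :=
        intervalIntegral.norm_integral_le_of_norm_le_const (f := (secondDiff · F z)) fun y hy => by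
          rw [Set.uIoc_of_le hv] at hy
          exact hC y hy.1.le (hy.2.trans hvD)
    _ = C * v := by rw [sub_zero, abs_of_nonneg hv]

theorem abs_sub_secondDiff_div_sq_le (hF : ∀ s t, IntervalIntegrable F volume s t)
    (hS : ∀ s t, ∫ x in s..t, F x = S t - S s) (hQ : ∀ t, HasDerivAt Q (S t) t) (hD : 0 < D)
    {z : ℝ} (hC : ∀ y, 0 ≤ y → y ≤ D → |secondDiff y F z| ≤ C) :
    |secondDiff D Q z / D ^ 2 - F z| ≤ C := by
  have hC0 : 0 ≤ C := (abs_nonneg _).trans (hC 0 le_rfl hD.le)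
  have hderiv (v : ℝ) : HasDerivAt (fun v => secondDiff v Q z - v ^ 2 * F z)
      (S (z + v) - S (z - v) - 2 * v * F z) v := by
    have h := ((((hQ (z + v)).comp_const_add z v).sub_const (2 * Q z)).add
      ((hQ (z - v)).comp_const_sub z v)).sub ((hasDerivAt_pow 2 v).mul_const (F z))
    exact h.congr_deriv (by push_cast; ring)
  have hmvt := norm_image_sub_le_of_norm_deriv_le_segment'
    (fun v _ => (hderiv v).hasDerivWithinAt)
    (fun v hv => (abs_add_sub_sub_two_mul_le hF hS hC hv.1 hv.2.le).trans
      (mul_le_mul_of_nonneg_left hv.2.le hC0)) D (Set.right_mem_Icc.2 hD.le)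
  simp only [secondDiff, Real.norm_eq_abs, add_zero, sub_zero] at hmvt
  unfold secondDiff
  rw [div_sub' (pow_ne_zero 2 hD.ne'), abs_div, abs_of_pos (pow_pos hD 2),
    div_le_iff₀ (pow_pos hD 2)]
  rwa [show Q z - 2 * Q z + Q z - 0 ^ 2 * F z = 0 by ring, sub_zero, mul_assoc, ← pow_two] at hmvt

theorem abs_secondDiff_sub_le (hF : ∀ s t, IntervalIntegrable F volume s t)
    (hS : ∀ s t, ∫ x in s..t, F x = S t - S s) (hC : ∀ z, |secondDiff D F z| ≤ C) (u v : ℝ) :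
    |secondDiff D S u - secondDiff D S v| ≤ C * |u - v| := by
  have hadd : IntervalIntegrable (fun x => F (x + D)) volume v u := by
    simpa using (hF (v + D) (u + D)).comp_add_right D
  have hsub : IntervalIntegrable (fun x => F (x - D)) volume v u := by
    simpa using (hF (v - D) (u - D)).comp_sub_right D
  have hint : ∫ x in v..u, secondDiff D F x = secondDiff D S u - secondDiff D S v := by
    unfold secondDiff
    rw [intervalIntegral.integral_add (hadd.sub ((hF v u).const_mul 2)) hsub,
      intervalIntegral.integral_sub hadd ((hF v u).const_mul 2),
      intervalIntegral.integral_comp_add_right, intervalIntegral.integral_comp_sub_right,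
      intervalIntegral.integral_const_mul, hS, hS, hS]
    ring
  rw [← hint]
  exact intervalIntegral.norm_integral_le_of_norm_le_const (f := secondDiff D F) fun x _ => hC x

end Primitive

/-- The truncated power `x₊^k / k!`; each is the derivative of the next for `k ≥ 1`, and
`truncPow 0` is the constant `1`, not the Heaviside function. -/
noncomputable def truncPow (k : ℕ) (x : ℝ) : ℝ := max x 0 ^ k / k.factorial

theorem truncPow_of_nonneg (k : ℕ) {x : ℝ} (hx : 0 ≤ x) :
    truncPow k x = x ^ k / k.factorial := by
  rw [truncPow, max_eq_left hx]

theorem truncPow_succ_of_nonpos (k : ℕ) {x : ℝ} (hx : x ≤ 0) : truncPow (k + 1) x = 0 := by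
  rw [truncPow, max_eq_right hx, zero_pow k.succ_ne_zero, zero_div]

theorem truncPow_one (x : ℝ) : truncPow 1 x = max x 0 := by
  simp only [truncPow, pow_one, Nat.factorial_one, Nat.cast_one, div_one]

@[fun_prop]
theorem continuous_truncPow (k : ℕ) : Continuous (truncPow k) := by
  unfold truncPow
  fun_prop

theorem mul_truncPow_succ (k : ℕ) (x : ℝ) :
    x * truncPow (k + 1) x = (k + 2) * truncPow (k + 2) x := by
  rcases le_total x 0 with hx | hx
  · simp only [truncPow_succ_of_nonpos _ hx, mul_zero]
  · rw [truncPow_of_nonneg _ hx, truncPow_of_nonneg _ hx, Nat.factorial_succ (k + 1)]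
    push_cast
    field_simp
    ring

theorem hasDerivAt_truncPow (k : ℕ) (x : ℝ) :
    HasDerivAt (truncPow (k + 2)) (truncPow (k + 1) x) x := by
  refine hasDerivAt_of_hasDerivAt_of_ne' (x := 0) (fun y hy => ?_)
    (continuous_truncPow _).continuousAt (continuous_truncPow _).continuousAt x
  rcases hy.lt_or_gt with hy | hy
  · rw [truncPow_succ_of_nonpos k hy.le]
    refine (hasDerivAt_const y 0).congr_of_eventuallyEq ?_
    filter_upwards [Iio_mem_nhds hy] with t ht using truncPow_succ_of_nonpos _ (le_of_lt ht)
  · refine (((hasDerivAt_pow (k + 2) y).div_const _).congr_deriv ?_).congr_of_eventuallyEq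
      (f := fun t => t ^ (k + 2) / ((k + 2).factorial : ℝ)) ?_
    · rw [truncPow_of_nonneg _ hy.le, Nat.factorial_succ (k + 1)]
      push_cast
      field_simp
      ring
    · filter_upwards [Ioi_mem_nhds hy] with t ht using truncPow_of_nonneg _ (le_of_lt ht)

theorem integral_truncPow (k : ℕ) (s t : ℝ) :
    ∫ x in s..t, truncPow (k + 1) x = truncPow (k + 2) t - truncPow (k + 2) s :=
  intervalIntegral.integral_eq_sub_of_hasDerivAt (fun x _ => hasDerivAt_truncPow k x)
    ((continuous_truncPow _).intervalIntegrable s t)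

theorem abs_secondDiff_truncPow_one_le {y : ℝ} (hy : 0 ≤ y) (x : ℝ) :
    |secondDiff y (truncPow 1) x| ≤ y := by
  simp only [secondDiff, truncPow_one]
  grind

theorem abs_secondDiff_truncPow_two_le {y : ℝ} (hy : 0 ≤ y) (x : ℝ) :
    |secondDiff y (truncPow 2) x| ≤ y ^ 2 := by
  have hfac : (Nat.factorial 2 : ℝ) = 2 := by norm_num [Nat.factorial]
  simp only [secondDiff, truncPow, hfac, abs_le]
  rcases max_cases (x + y) 0 with ⟨h₁, h₁'⟩ | ⟨h₁, h₁'⟩ <;>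
    rcases max_cases x 0 with ⟨h₂, h₂'⟩ | ⟨h₂, h₂'⟩ <;>
    rcases max_cases (x - y) 0 with ⟨h₃, h₃'⟩ | ⟨h₃, h₃'⟩ <;>
    rw [h₁, h₂, h₃] <;> constructor <;> nlinarith

/-- The second difference quotient `D⁻² Δ²` of the truncated power of order `k`, that is,
`x₊^(k-2) / (k-2)!` convolved with the hat kernel of width `D`. Thus `smoothedPow D 1` is the hat
kernel itself and `smoothedPow D 2` is a smoothed Heaviside function. -/
noncomputable def smoothedPow (D : ℝ) (k : ℕ) (x : ℝ) : ℝ := secondDiff D (truncPow k) x / D ^ 2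

section SmoothedPow

variable {D : ℝ} (k : ℕ) (x : ℝ)

theorem hasDerivAt_smoothedPow :
    HasDerivAt (smoothedPow D (k + 2)) (smoothedPow D (k + 1) x) x :=
  (hasDerivAt_secondDiff (hasDerivAt_truncPow k) D x).div_const _

theorem abs_smoothedPow_one_le (hD : 0 < D) : |smoothedPow D 1 x| ≤ 1 / D := by
  rw [smoothedPow, abs_div, abs_of_pos (pow_pos hD 2), div_le_div_iff₀ (pow_pos hD 2) hD, one_mul,
    pow_two]
  exact mul_le_mul_of_nonneg_right (abs_secondDiff_truncPow_one_le hD.le x) hD.le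

theorem abs_smoothedPow_sub_truncPow_le (hD : 0 < D) {C : ℝ}
    (hC : ∀ y, 0 ≤ y → y ≤ D → |secondDiff y (truncPow (k + 1)) x| ≤ C) :
    |smoothedPow D (k + 3) x - truncPow (k + 1) x| ≤ C :=
  abs_sub_secondDiff_div_sq_le (fun _ _ => (continuous_truncPow _).intervalIntegrable _ _)
    (integral_truncPow k) (hasDerivAt_truncPow (k + 1)) hD hC

theorem abs_mul_smoothedPow_sub_le (hD : 0 < D) {C : ℝ}
    (hC : ∀ y, 0 ≤ y → y ≤ D → |secondDiff y (truncPow (k + 1)) x| ≤ C) :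
    |x * smoothedPow D (k + 2) x - (k + 1) * smoothedPow D (k + 3) x| ≤ 3 * C := by
  have hmul : x * smoothedPow D (k + 2) x = (k + 3) * smoothedPow D (k + 3) x -
      (truncPow (k + 2) (x + D) - truncPow (k + 2) (x - D)) / D := by
    have h₁ := mul_truncPow_succ (k + 1) (x + D)
    have h₂ := mul_truncPow_succ (k + 1) x
    have h₃ := mul_truncPow_succ (k + 1) (x - D)
    push_cast at h₁ h₂ h₃
    unfold smoothedPow secondDiff
    field_simp
    linear_combination h₁ - 2 * h₂ + h₃
  have hslope : |(truncPow (k + 2) (x + D) - truncPow (k + 2) (x - D)) / D -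
      2 * truncPow (k + 1) x| ≤ C := by
    rw [div_sub' hD.ne', abs_div, abs_of_pos hD, div_le_iff₀ hD, ← mul_assoc, mul_comm D 2]
    exact abs_add_sub_sub_two_mul_le
      (fun _ _ => (continuous_truncPow (k + 1)).intervalIntegrable _ _) (integral_truncPow k)
      hC hD.le le_rfl
  have hcenter := abs_smoothedPow_sub_truncPow_le k x hD hC
  rw [abs_le] at hslope hcenter
  rw [hmul, abs_le]
  constructor <;> linarith

end SmoothedPow

/-! ### Smoothed distribution functions of rank statistics -/

section PermExp

variable {m : ℕ}

theorem permExp_const_mul (c : ℝ) (f : Equiv.Perm (Fin m) → ℝ) :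
    permExp (fun π => c * f π) = c * permExp f := by
  simp only [permExp, ← mul_sum, mul_div_assoc]

theorem permExp_sub (f g : Equiv.Perm (Fin m) → ℝ) :
    permExp (fun π => f π - g π) = permExp f - permExp g := by
  simp only [permExp, sum_sub_distrib, sub_div]

theorem permExp_const (c : ℝ) : permExp (fun _ : Equiv.Perm (Fin m) => c) = c := by
  rw [permExp, sum_const, card_univ, Fintype.card_perm, Fintype.card_fin, nsmul_eq_mul,
    mul_div_cancel_left₀ _ (Nat.cast_ne_zero.2 m.factorial_ne_zero)]

theorem permExp_le_permExp {f g : Equiv.Perm (Fin m) → ℝ} (h : ∀ π, f π ≤ g π) :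
    permExp f ≤ permExp g :=
  div_le_div_of_nonneg_right (sum_le_sum fun π _ => h π) (Nat.cast_nonneg _)

theorem abs_permExp_le {f : Equiv.Perm (Fin m) → ℝ} {c : ℝ} (h : ∀ π, |f π| ≤ c) :
    |permExp f| ≤ c := by
  rw [abs_le]
  exact ⟨(permExp_const (m := m) (-c)).ge.trans (permExp_le_permExp fun π => (abs_le.1 (h π)).1),
    (permExp_le_permExp fun π => (abs_le.1 (h π)).2).trans (permExp_const c).le⟩

end PermExp

section SmoothedFr

variable {m : ℕ} (B : Matrix (Fin m) (Fin m) ℝ) {D : ℝ}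

theorem Fr_nonneg (z : ℝ) : 0 ≤ Fr B z := by
  rw [← permExp_const (m := m) 0]
  exact permExp_le_permExp fun π => by split_ifs <;> norm_num

theorem Fr_le_one (z : ℝ) : Fr B z ≤ 1 := by
  rw [← permExp_const (m := m) 1]
  exact permExp_le_permExp fun π => by split_ifs <;> norm_num

theorem monotone_Fr : Monotone (Fr B) := fun s t hst =>
  permExp_le_permExp fun π => by
    split_ifs with h₁ h₂
    · exact le_rfl
    · exact absurd (h₁.trans hst) h₂
    · exact zero_le_one
    · exact le_rfl

/-- The mean of `smoothedPow D k (z - T_B)`. Thus `smoothedFr B D 2` is the distribution function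
of `T_B` smoothed by the hat kernel of width `D`, and `smoothedFr B D 1` is its derivative. -/
noncomputable def smoothedFr (B : Matrix (Fin m) (Fin m) ℝ) (D : ℝ) (k : ℕ) (z : ℝ) : ℝ :=
  permExp fun π => smoothedPow D k (z - rankT B π)

theorem smoothedFr_eq_secondDiff_div (k : ℕ) (z : ℝ) :
    smoothedFr B D k z =
      secondDiff D (fun x => permExp fun π => truncPow k (x - rankT B π)) z / D ^ 2 := by
  simp only [smoothedFr, smoothedPow, secondDiff, permExp, sum_add_distrib, sum_sub_distrib,
    ← mul_sum, ← sum_div, add_sub_right_comm _ D, sub_right_comm _ D]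
  ring

theorem hasDerivAt_permExp_sub {f f' : ℝ → ℝ} (hf : ∀ t, HasDerivAt f (f' t) t) (z : ℝ) :
    HasDerivAt (fun x => permExp fun π => f (x - rankT B π))
      (permExp fun π => f' (z - rankT B π)) z :=
  (HasDerivAt.fun_sum fun _ _ => (hf _).comp_sub_const z _).div_const _

theorem hasDerivAt_smoothedFr (k : ℕ) (z : ℝ) :
    HasDerivAt (smoothedFr B D (k + 2)) (smoothedFr B D (k + 1) z) z :=
  hasDerivAt_permExp_sub B (hasDerivAt_smoothedPow k) z

theorem hasDerivWithinAt_truncPow_one_sub (c x : ℝ) :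
    HasDerivWithinAt (fun t => truncPow 1 (t - c)) (if c ≤ x then 1 else 0) (Set.Ioi x) x := by
  simp only [truncPow_one]
  split_ifs with hc
  · refine ((hasDerivWithinAt_id x _).sub_const c).congr (fun t ht => ?_) ?_
    · exact max_eq_left (sub_nonneg.2 (hc.trans (le_of_lt ht)))
    · exact max_eq_left (sub_nonneg.2 hc)
  · refine ((hasDerivAt_const x 0).congr_of_eventuallyEq ?_).hasDerivWithinAt
    filter_upwards [Iio_mem_nhds (not_le.1 hc)] with t ht
    exact max_eq_right (sub_nonpos.2 (le_of_lt ht))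

theorem integral_Fr (s t : ℝ) :
    ∫ x in s..t, Fr B x =
      permExp (fun π => truncPow 1 (t - rankT B π)) -
        permExp (fun π => truncPow 1 (s - rankT B π)) := by
  refine intervalIntegral.integral_eq_sub_of_hasDeriv_right
    (f := fun x => permExp fun π => truncPow 1 (x - rankT B π)) ?_ (fun x _ => ?_)
    (monotone_Fr B).intervalIntegrable
  · unfold permExp
    fun_prop
  · exact (HasDerivWithinAt.fun_sum fun π _ =>
      hasDerivWithinAt_truncPow_one_sub (rankT B π) x).div_const _

theorem abs_smoothedFr_one_sub_le {M : ℝ} (hD : 0 < D)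
    (hM : ∀ z, |secondDiff D (Fr B) z| ≤ M * D ^ 2) (u v : ℝ) :
    |smoothedFr B D 1 u - smoothedFr B D 1 v| ≤ M * |u - v| := by
  rw [smoothedFr_eq_secondDiff_div, smoothedFr_eq_secondDiff_div, ← sub_div, abs_div,
    abs_of_pos (pow_pos hD 2), div_le_iff₀ (pow_pos hD 2), mul_right_comm]
  exact abs_secondDiff_sub_le (fun _ _ => (monotone_Fr B).intervalIntegrable) (integral_Fr B) hM u v

theorem abs_smoothedFr_two_sub_Fr_le {C : ℝ} (hD : 0 < D) {z : ℝ}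
    (hC : ∀ y, 0 ≤ y → y ≤ D → |secondDiff y (Fr B) z| ≤ C) :
    |smoothedFr B D 2 z - Fr B z| ≤ C := by
  rw [smoothedFr_eq_secondDiff_div]
  exact abs_sub_secondDiff_div_sq_le (fun _ _ => (monotone_Fr B).intervalIntegrable) (integral_Fr B)
    (hasDerivAt_permExp_sub B (hasDerivAt_truncPow 0)) hD hC

theorem abs_smoothedFr_one_le (hD : 0 < D) (z : ℝ) : |smoothedFr B D 1 z| ≤ 1 / D :=
  abs_permExp_le fun _ => abs_smoothedPow_one_le _ hD

theorem minorLipschitz_smoothedPow_one {n : ℕ} {a : Matrix (Fin n) (Fin n) ℝ} {M : ℝ} (hD : 0 < D)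
    (hM : ∀ m, n ≤ m + 8 → ∀ ρ γ : Fin m → Fin n, StrictMono ρ → StrictMono γ →
      ∀ z, |secondDiff D (Fr fun i j => a (ρ i) (γ j)) z| ≤ M * D ^ 2) (z : ℝ) :
    MinorLipschitz a (fun t => smoothedPow D 1 (z - t)) M := by
  intro R C hRC hR x y
  have hmean (x : ℝ) : minorMean a R C (fun t => smoothedPow D 1 (z - t)) x =
      smoothedFr (fun i j => a (R.orderEmbOfFin rfl i) (C.orderEmbOfFin hRC.symm j)) D 1
        (z - x) := by
    rw [minorMean_eq_permExp a (R.orderIsoOfFin rfl).toEquiv (C.orderIsoOfFin hRC.symm).toEquiv]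
    simp only [← sub_sub]
    rfl
  rw [hmean, hmean, abs_sub_comm x, ← sub_sub_sub_cancel_left x y z]
  exact abs_smoothedFr_one_sub_le _ hD
    (hM _ hR _ _ (OrderEmbedding.strictMono _) (OrderEmbedding.strictMono _)) _ _

end SmoothedFr

/-! ### The Ornstein–Uhlenbeck equation `u'' + x u' - c u = g` -/

section OrnsteinUhlenbeck

variable {u u' u'' v v' : ℝ → ℝ} {c e K : ℝ}

theorem second_deriv_nonpos_of_isLocalMax {x : ℝ} (hmax : IsLocalMax u x)
    (hu : ∀ x, HasDerivAt u (u' x) x) (hu' : HasDerivAt u' (u'' x) x) : u'' x ≤ 0 := by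
  by_contra! hpos
  have hderiv : deriv u = u' := funext fun y => (hu y).deriv
  have hmin : IsLocalMin u x := isLocalMin_of_deriv_deriv_pos (by rwa [hderiv, hu'.deriv])
    (by rw [hderiv, hmax.hasDerivAt_eq_zero (hu x)]) (hu x).continuousAt
  have hconst : u =ᶠ[nhds x] fun _ => u x := by
    filter_upwards [hmin, hmax] with y h₁ h₂ using le_antisymm h₂ h₁
  have hzero : u' =ᶠ[nhds x] fun _ => 0 := by simpa [hderiv] using hconst.deriv
  exact hpos.ne' (hu'.unique ((hasDerivAt_const x (0 : ℝ)).congr_of_eventuallyEq hzero))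

theorem tendsto_log_one_add_sq_cocompact :
    Filter.Tendsto (fun x : ℝ => Real.log (1 + x ^ 2)) (Filter.cocompact ℝ) Filter.atTop := by
  refine Real.tendsto_log_atTop.comp (Filter.tendsto_atTop_add_const_left _ 1 ?_)
  exact ((Filter.tendsto_pow_atTop two_ne_zero).comp tendsto_norm_cocompact_atTop).congr sq_abs

theorem hasDerivAt_log_one_add_sq (x : ℝ) :
    HasDerivAt (fun x => Real.log (1 + x ^ 2)) (2 * (x / (1 + x ^ 2))) x := by
  simpa [mul_div_assoc] using ((hasDerivAt_pow 2 x).const_add 1).log (by positivity)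

theorem hasDerivAt_div_one_add_sq (x : ℝ) :
    HasDerivAt (fun x => x / (1 + x ^ 2)) ((1 - x ^ 2) / (1 + x ^ 2) ^ 2) x := by
  refine ((hasDerivAt_id x).div ((hasDerivAt_pow 2 x).const_add 1) (by positivity)).congr_deriv ?_
  simp only [id, Nat.cast_ofNat, Nat.add_one_sub_one, pow_one]
  ring

theorem ou_log_one_add_sq_le (x : ℝ) :
    2 * ((1 - x ^ 2) / (1 + x ^ 2) ^ 2) + x * (2 * (x / (1 + x ^ 2))) ≤ 4 := by
  rw [← mul_div_assoc, ← mul_div_assoc, ← mul_div_assoc,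
    div_add_div _ _ (by positivity) (by positivity), div_le_iff₀ (by positivity)]
  nlinarith [sq_nonneg x, sq_nonneg (x ^ 2), sq_nonneg (x ^ 3)]

theorem exists_forall_sub_log_one_add_sq_le (hu : Continuous u) (hK : ∀ x, |u x| ≤ K) {η : ℝ}
    (hη : 0 < η) : ∃ x, ∀ y, u y - η * Real.log (1 + y ^ 2) ≤ u x - η * Real.log (1 + x ^ 2) := by
  have hlog : Continuous fun x : ℝ => Real.log (1 + x ^ 2) :=
    continuous_iff_continuousAt.2 fun x => (hasDerivAt_log_one_add_sq x).continuousAt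
  refine (hu.sub (hlog.const_mul η)).exists_forall_ge ?_
  simp only [sub_eq_add_neg]
  exact Filter.tendsto_atBot_add_left_of_ge _ K (fun x => (abs_le.1 (hK x)).2)
    (Filter.tendsto_neg_atTop_atBot.comp (tendsto_log_one_add_sq_cocompact.const_mul_atTop hη))

-- Maximum principle for `u - η log (1 + x²)`; the barrier makes it attain its maximum.
theorem mul_le_of_neg_le_ou (hc : 0 ≤ c) (hu : ∀ x, HasDerivAt u (u' x) x)
    (hu' : ∀ x, HasDerivAt u' (u'' x) x) (hK : ∀ x, |u x| ≤ K)
    (h : ∀ x, -e ≤ u'' x + x * u' x - c * u x) (z : ℝ) : c * u z ≤ e := by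
  have hlog (x : ℝ) : 0 ≤ Real.log (1 + x ^ 2) :=
    Real.log_nonneg (le_add_of_nonneg_right (sq_nonneg x))
  have hη (η : ℝ) (hη : 0 < η) : c * u z ≤ e + η * (4 + c * Real.log (1 + z ^ 2)) := by
    obtain ⟨x, hx⟩ := exists_forall_sub_log_one_add_sq_le
      (continuous_iff_continuousAt.2 fun x => (hu x).continuousAt) hK hη
    have hw (x : ℝ) := (hu x).fun_sub ((hasDerivAt_log_one_add_sq x).const_mul η)
    have hw' (x : ℝ) := (hu' x).fun_sub (((hasDerivAt_div_one_add_sq x).const_mul 2).const_mul η)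
    have hmax : IsLocalMax (fun x => u x - η * Real.log (1 + x ^ 2)) x :=
      Filter.Eventually.of_forall hx
    have hfirst : u' x = η * (2 * (x / (1 + x ^ 2))) :=
      sub_eq_zero.1 (hmax.hasDerivAt_eq_zero (hw x))
    have hsecond := second_deriv_nonpos_of_isLocalMax
      (u'' := fun x => u'' x - η * (2 * ((1 - x ^ 2) / (1 + x ^ 2) ^ 2))) hmax hw (hw' x)
    have hou := h x
    rw [hfirst] at hou
    linarith [mul_le_mul_of_nonneg_left (hx z) hc, mul_nonneg hc (mul_nonneg hη.le (hlog x)),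
      mul_le_mul_of_nonneg_left (ou_log_one_add_sq_le x) hη.le]
  have hb : 0 ≤ 4 + c * Real.log (1 + z ^ 2) := by positivity [hlog z]
  refine le_of_forall_pos_le_add fun ε hε => (hη (ε / (4 + c * Real.log (1 + z ^ 2) + 1))
    (by positivity)).trans ?_
  gcongr
  rw [div_mul_eq_mul_div, div_le_iff₀ (by positivity)]
  nlinarith

theorem mul_abs_le_of_abs_ou_le (hc : 0 ≤ c) (hu : ∀ x, HasDerivAt u (u' x) x)
    (hu' : ∀ x, HasDerivAt u' (u'' x) x) (hK : ∀ x, |u x| ≤ K)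
    (h : ∀ x, |u'' x + x * u' x - c * u x| ≤ e) (z : ℝ) : c * |u z| ≤ e := by
  have hpos := mul_le_of_neg_le_ou hc hu hu' hK (fun x => (abs_le.1 (h x)).1) z
  have hneg := mul_le_of_neg_le_ou (e := e) hc (fun x => (hu x).fun_neg) (fun x => (hu' x).fun_neg)
    (fun x => (abs_neg (u x)).trans_le (hK x)) (fun x => by linarith [(abs_le.1 (h x)).2]) z
  rw [← abs_of_nonneg hc, ← abs_mul, abs_le']
  exact ⟨hpos, by linarith⟩

theorem hasDerivAt_exp_sq_div_two (x : ℝ) :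
    HasDerivAt (fun x : ℝ => Real.exp (x ^ 2 / 2)) (Real.exp (x ^ 2 / 2) * x) x := by
  simpa using ((hasDerivAt_pow 2 x).div_const 2).exp

-- Integrating factor `exp (x² / 2)`, compared with `exp (x² / 2) x / (1 + x²)`, whose derivative is
-- at least `exp (x² / 2) / 2`.
theorem monotone_exp_sq_mul_add (hv : ∀ x, HasDerivAt v (v' x) x)
    (h : ∀ x, |v' x + x * v x| ≤ e) :
    Monotone fun x => Real.exp (x ^ 2 / 2) * (2 * e * (x / (1 + x ^ 2)) + v x) := by
  have hderiv (x : ℝ) := (hasDerivAt_exp_sq_div_two x).fun_mul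
    (((hasDerivAt_div_one_add_sq x).const_mul (2 * e)).fun_add (hv x))
  refine monotone_of_deriv_nonneg (fun x => (hderiv x).differentiableAt) fun x => ?_
  have hcompare : 1 / 2 ≤ (1 - x ^ 2) / (1 + x ^ 2) ^ 2 + x * (x / (1 + x ^ 2)) := by
    rw [mul_div_assoc', div_add_div _ _ (by positivity) (by positivity),
      div_le_div_iff₀ (by norm_num) (by positivity)]
    nlinarith [sq_nonneg (x ^ 2 - 1), sq_nonneg x, sq_nonneg (x * (x ^ 2 - 1))]
  have he : 0 ≤ e := (abs_nonneg _).trans (h x)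
  calc 0 ≤ Real.exp (x ^ 2 / 2) * (2 * e * ((1 - x ^ 2) / (1 + x ^ 2) ^ 2 + x * (x / (1 + x ^ 2))) +
        (v' x + x * v x)) := by
        refine mul_nonneg (Real.exp_pos _).le ?_
        linarith [mul_le_mul_of_nonneg_left hcompare (mul_nonneg zero_le_two he),
          (abs_le.1 (h x)).1]
    _ = _ := by
      rw [(hderiv x).deriv]
      ring

theorem abs_exp_sq_mul_sub_le (hv : ∀ x, HasDerivAt v (v' x) x)
    (h : ∀ x, |v' x + x * v x| ≤ e) (z : ℝ) :
    |Real.exp (z ^ 2 / 2) * v z - v 0| ≤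
      2 * e * (Real.exp (z ^ 2 / 2) * (|z| / (1 + z ^ 2))) := by
  have hmono := monotone_exp_sq_mul_add hv h
  have hmono' := monotone_exp_sq_mul_add (v := fun x => -v x) (e := e) (fun x => (hv x).fun_neg)
    fun x => by
      rw [mul_neg, ← neg_add, abs_neg]
      exact h x
  rw [abs_le]
  rcases le_total 0 z with hz | hz
  · have h₁ := hmono hz
    have h₂ := hmono' hz
    simp only [ne_eq, OfNat.ofNat_ne_zero, not_false_eq_true, zero_pow, zero_div, Real.exp_zero,
      add_zero, div_one, mul_zero, zero_add, one_mul, mul_neg, abs_of_nonneg hz,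
      neg_le_sub_iff_le_add, tsub_le_iff_right] at h₁ h₂ ⊢
    constructor <;> linarith
  · have h₁ := hmono hz
    have h₂ := hmono' hz
    simp only [ne_eq, OfNat.ofNat_ne_zero, not_false_eq_true, zero_pow, zero_div, Real.exp_zero,
      add_zero, div_one, mul_zero, zero_add, one_mul, mul_neg, abs_of_nonpos hz, neg_div, neg_neg,
      tsub_le_iff_right, le_neg_add_iff_add_le] at h₁ h₂ ⊢
    constructor <;> linarith

theorem abs_le_exp_sq_div_two (z : ℝ) : |z| ≤ Real.exp (z ^ 2 / 2) := by
  have h := Real.add_one_le_exp (z ^ 2 / 2)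
  rw [← sq_abs] at h ⊢
  nlinarith [sq_nonneg (|z| - 1)]

theorem abs_mul_le_of_abs_deriv_add_mul_le (hv : ∀ x, HasDerivAt v (v' x) x)
    (h : ∀ x, |v' x + x * v x| ≤ e) (z : ℝ) : |z * v z| ≤ |v 0| + 2 * e := by
  set W := Real.exp (z ^ 2 / 2)
  have hW : 0 < W := Real.exp_pos _
  have he : 0 ≤ e := (abs_nonneg _).trans (h 0)
  have hWv : W * |v z| ≤ |v 0| + 2 * e * (W * (|z| / (1 + z ^ 2))) := by
    rw [← abs_of_pos hW, ← abs_mul, abs_of_pos hW]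
    linarith [abs_sub_abs_le_abs_sub (W * v z) (v 0), abs_exp_sq_mul_sub_le hv h z]
  have hfrac : |z| * (|z| / (1 + z ^ 2)) ≤ 1 := by
    rw [← mul_div_assoc, div_le_one (by positivity), ← pow_two, sq_abs]
    linarith
  refine le_of_mul_le_mul_left ?_ hW
  calc W * |z * v z| = |z| * (W * |v z|) := by rw [abs_mul, mul_left_comm]
    _ ≤ |z| * (|v 0| + 2 * e * (W * (|z| / (1 + z ^ 2)))) := by gcongr
    _ = |z| * |v 0| + 2 * e * W * (|z| * (|z| / (1 + z ^ 2))) := by ring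
    _ ≤ W * |v 0| + 2 * e * W * 1 := by
      gcongr
      exact abs_le_exp_sq_div_two z
    _ = W * (|v 0| + 2 * e) := by ring

theorem abs_deriv_zero_le_of_abs_ou_le (hu : ∀ x, HasDerivAt u (u' x) x)
    (hu' : ∀ x, HasDerivAt u' (u'' x) x) (hK : ∀ x, |u x| ≤ K)
    (h : ∀ x, |u'' x + x * u' x| ≤ e) : |u' 0| ≤ 4 * K + 2 * e := by
  have he : 0 ≤ e := (abs_nonneg _).trans (h 0)
  obtain ⟨ξ, hξ, hslope⟩ := exists_hasDerivAt_eq_slope u u' zero_lt_one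
    (continuous_iff_continuousAt.2 fun x => (hu x).continuousAt).continuousOn fun x _ => hu x
  have hu'ξ : |u' ξ| ≤ 2 * K := by
    rw [hslope, sub_zero, div_one]
    linarith [abs_sub (u 1) (u 0), hK 1, hK 0]
  have hfrac : |ξ| / (1 + ξ ^ 2) ≤ 1 / 2 := by
    rw [div_le_div_iff₀ (by positivity) (by norm_num), ← sq_abs]
    nlinarith [sq_nonneg (|ξ| - 1)]
  have hexp : Real.exp (ξ ^ 2 / 2) ≤ 2 := by
    rw [← Real.le_log_iff_exp_le two_pos]
    nlinarith [Real.log_two_gt_d9, hξ.1, hξ.2]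
  set W := Real.exp (ξ ^ 2 / 2)
  have hW : 0 < W := Real.exp_pos _
  calc |u' 0| ≤ |W * u' ξ| + |W * u' ξ - u' 0| := by
        linarith [abs_sub_abs_le_abs_sub (u' 0) (W * u' ξ), abs_sub_comm (u' 0) (W * u' ξ)]
    _ ≤ 2 * (2 * K) + 2 * e * (2 * (1 / 2)) := by
      refine add_le_add ?_ ((abs_exp_sq_mul_sub_le hu' h ξ).trans (by gcongr))
      rw [abs_mul, abs_of_pos hW]
      gcongr
    _ = 4 * K + 2 * e := by ring

theorem abs_second_deriv_le_of_abs_ou_le (hc : 1 ≤ c) (hu : ∀ x, HasDerivAt u (u' x) x)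
    (hu' : ∀ x, HasDerivAt u' (u'' x) x) (hK : ∀ x, |u x| ≤ K)
    (h : ∀ x, |u'' x + x * u' x - c * u x| ≤ e) (z : ℝ) : |u'' z| ≤ 14 * e := by
  have hc₀ : 0 ≤ c := zero_le_one.trans hc
  have hcu := mul_abs_le_of_abs_ou_le hc₀ hu hu' hK h
  have hu_le (x : ℝ) : |u x| ≤ e := (le_mul_of_one_le_left (abs_nonneg _) hc).trans (hcu x)
  have hg (x : ℝ) : |u'' x + x * u' x| ≤ 2 * e := by
    have hcu_abs : |c * u x| ≤ e := by rw [abs_mul, abs_of_nonneg hc₀]; exact hcu x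
    linarith [abs_sub_abs_le_abs_sub (u'' x + x * u' x) (c * u x), h x]
  have hzero := abs_deriv_zero_le_of_abs_ou_le hu hu' hu_le hg
  have hmul := abs_mul_le_of_abs_deriv_add_mul_le hu' hg z
  calc |u'' z| = |(u'' z + z * u' z) - z * u' z| := by rw [add_sub_cancel_right]
    _ ≤ |u'' z + z * u' z| + |z * u' z| := abs_sub _ _
    _ ≤ 14 * e := by linarith [hg z]

end OrnsteinUhlenbeck

/-! ### The normal distribution -/

section Gauss

theorem gaussD_eq_gaussianPDFReal : gaussD = ProbabilityTheory.gaussianPDFReal 0 1 := by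
  ext x
  simp only [gaussD, ProbabilityTheory.gaussianPDFReal, NNReal.coe_one, mul_one, sub_zero]

theorem integrable_gaussD : Integrable gaussD :=
  gaussD_eq_gaussianPDFReal ▸ ProbabilityTheory.integrable_gaussianPDFReal 0 1

theorem integral_gaussD : ∫ x, gaussD x = 1 :=
  gaussD_eq_gaussianPDFReal ▸ ProbabilityTheory.integral_gaussianPDFReal_eq_one 0 one_ne_zero

theorem gaussD_nonneg (x : ℝ) : 0 ≤ gaussD x := by
  unfold gaussD
  positivity

@[fun_prop]
theorem continuous_gaussD : Continuous gaussD := by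
  unfold gaussD
  fun_prop

theorem gaussD_neg (x : ℝ) : gaussD (-x) = gaussD x := by
  rw [gaussD, gaussD, neg_sq]

theorem hasDerivAt_gaussD (x : ℝ) : HasDerivAt gaussD (-x * gaussD x) x := by
  refine ((((hasDerivAt_pow 2 x).fun_neg.div_const 2).exp.const_mul
    (Real.sqrt (2 * Real.pi))⁻¹)).congr_deriv ?_
  simp only [gaussD, Nat.cast_ofNat, Nat.add_one_sub_one, pow_one]
  ring

theorem hasDerivAt_gaussCDF (x : ℝ) : HasDerivAt gaussCDF (gaussD x) x := by
  have heq : gaussCDF = fun x => (∫ t in (0 : ℝ)..x, gaussD t) + gaussCDF 0 := by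
    ext y
    rw [← sub_eq_iff_eq_add]
    exact intervalIntegral.integral_Iic_sub_Iic integrable_gaussD.integrableOn
      integrable_gaussD.integrableOn
  rw [heq]
  exact (continuous_gaussD.integral_hasStrictDerivAt 0 x).hasDerivAt.add_const _

theorem gaussCDF_nonneg (x : ℝ) : 0 ≤ gaussCDF x :=
  setIntegral_nonneg measurableSet_Iic fun t _ => gaussD_nonneg t

theorem gaussCDF_le_one (x : ℝ) : gaussCDF x ≤ 1 := by
  rw [← integral_gaussD]
  exact setIntegral_le_integral integrable_gaussD (.of_forall gaussD_nonneg)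

theorem gaussCDF_neg (x : ℝ) : gaussCDF (-x) = 1 - gaussCDF x := by
  have hreflect : gaussCDF (-x) = ∫ t in Set.Ioi x, gaussD t := by
    simpa only [gaussCDF, gaussD_neg, neg_neg] using integral_comp_neg_Iic (-x) gaussD
  rw [hreflect, eq_sub_iff_add_eq', ← integral_gaussD]
  exact intervalIntegral.integral_Iic_add_Ioi integrable_gaussD.integrableOn
    integrable_gaussD.integrableOn

theorem integrable_sq_mul_gaussD : Integrable fun x => x ^ 2 * gaussD x := by
  refine ((integrable_rpow_mul_exp_neg_mul_sq (b := 1 / 2) (by norm_num) (s := 2)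
    (by norm_num)).const_mul (Real.sqrt (2 * Real.pi))⁻¹).congr (.of_forall fun x => ?_)
  simp only [Real.rpow_two, gaussD, show -(1 / 2) * x ^ 2 = -(x ^ 2) / 2 by ring]
  ring

theorem sq_mul_gaussCDF_le {x : ℝ} (hx : x ≤ 0) :
    x ^ 2 * gaussCDF x ≤ ∫ t, t ^ 2 * gaussD t :=
  calc x ^ 2 * gaussCDF x = ∫ t in Set.Iic x, x ^ 2 * gaussD t := (integral_const_mul _ _).symm
    _ ≤ ∫ t in Set.Iic x, t ^ 2 * gaussD t :=
      setIntegral_mono_on (integrable_gaussD.const_mul _).integrableOn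
        integrable_sq_mul_gaussD.integrableOn measurableSet_Iic fun t (ht : t ≤ x) =>
          mul_le_mul_of_nonneg_right (by nlinarith) (gaussD_nonneg t)
    _ ≤ ∫ t, t ^ 2 * gaussD t := setIntegral_le_integral integrable_sq_mul_gaussD
      (.of_forall fun t => mul_nonneg (sq_nonneg t) (gaussD_nonneg t))

theorem gaussD_mul_one_add_le (x : ℝ) : gaussD x * (1 + x ^ 2 / 2) ≤ 1 := by
  have hsqrt : (Real.sqrt (2 * Real.pi))⁻¹ ≤ 1 :=
    inv_le_one_of_one_le₀ (Real.one_le_sqrt.2 (by linarith [Real.pi_gt_three]))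
  have hexp : Real.exp (-(x ^ 2) / 2) * (1 + x ^ 2 / 2) ≤ 1 := by
    rw [neg_div, Real.exp_neg, inv_mul_le_iff₀ (Real.exp_pos _)]
    linarith [Real.add_one_le_exp (x ^ 2 / 2)]
  rw [gaussD, mul_assoc]
  exact mul_le_one₀ hsqrt (by positivity) hexp

theorem gaussD_le_one (x : ℝ) : gaussD x ≤ 1 := by
  nlinarith [gaussD_mul_one_add_le x, mul_nonneg (gaussD_nonneg x) (sq_nonneg x)]

theorem abs_mul_gaussD_le_one (x : ℝ) : |x * gaussD x| ≤ 1 := by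
  rw [abs_le]
  constructor <;> nlinarith [gaussD_mul_one_add_le x,
    mul_nonneg (gaussD_nonneg x) (sq_nonneg (x - 1)),
    mul_nonneg (gaussD_nonneg x) (sq_nonneg (x + 1))]

theorem abs_gaussD_mul_sq_sub_one_le (x : ℝ) : |gaussD x * (x ^ 2 - 1)| ≤ 2 := by
  rw [abs_le]
  constructor <;> nlinarith [gaussD_mul_one_add_le x, gaussD_nonneg x,
    mul_nonneg (gaussD_nonneg x) (sq_nonneg x)]

/-- `E (z - Z)₊` for a standard normal `Z`, an antiderivative of `gaussCDF`. -/
noncomputable def gaussPrimitive₁ (z : ℝ) : ℝ := z * gaussCDF z + gaussD z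

/-- `E (z - Z)₊² / 2` for a standard normal `Z`, an antiderivative of `gaussPrimitive₁`. -/
noncomputable def gaussPrimitive₂ (z : ℝ) : ℝ := ((z ^ 2 + 1) * gaussCDF z + z * gaussD z) / 2

theorem hasDerivAt_gaussPrimitive₁ (z : ℝ) : HasDerivAt gaussPrimitive₁ (gaussCDF z) z := by
  refine (((hasDerivAt_id' z).fun_mul (hasDerivAt_gaussCDF z)).fun_add
    (hasDerivAt_gaussD z)).congr_deriv ?_
  ring

theorem hasDerivAt_gaussPrimitive₂ (z : ℝ) :
    HasDerivAt gaussPrimitive₂ (gaussPrimitive₁ z) z := by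
  refine (((((hasDerivAt_pow 2 z).add_const 1).fun_mul (hasDerivAt_gaussCDF z)).fun_add
    ((hasDerivAt_id' z).fun_mul (hasDerivAt_gaussD z))).div_const 2).congr_deriv ?_
  simp only [gaussPrimitive₁, Nat.cast_ofNat, Nat.add_one_sub_one, pow_one]
  ring

theorem exists_abs_gaussPrimitive₁_sub_le :
    ∃ K, ∀ z, |gaussPrimitive₁ z - truncPow 1 z| ≤ K := by
  set V := ∫ t, t ^ 2 * gaussD t
  have htail {x : ℝ} (hx : x ≤ 0) : |x * gaussCDF x| ≤ V + 1 := by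
    have h₀ := gaussCDF_nonneg x
    rw [abs_le]
    constructor <;> nlinarith [sq_mul_gaussCDF_le hx, gaussCDF_le_one x,
      mul_nonneg h₀ (sq_nonneg (x + 1)), mul_nonneg h₀ (sq_nonneg x)]
  refine ⟨V + 2, fun z => ?_⟩
  have hmul : |gaussPrimitive₁ z - truncPow 1 z - gaussD z| ≤ V + 1 := by
    rw [truncPow_one, gaussPrimitive₁]
    rcases le_total z 0 with hz | hz
    · rw [max_eq_right hz]
      simpa using htail hz
    · rw [max_eq_left hz]
      convert htail (neg_nonpos.2 hz) using 2
      rw [gaussCDF_neg]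
      ring
  rw [abs_le] at hmul ⊢
  constructor <;> linarith [gaussD_nonneg z, gaussD_le_one z]

theorem exists_abs_gaussPrimitive₂_sub_le :
    ∃ K, ∀ z, |gaussPrimitive₂ z - truncPow 2 z| ≤ K := by
  refine ⟨(∫ t, t ^ 2 * gaussD t) + 1, fun z => ?_⟩
  have hxD := abs_le.1 (abs_mul_gaussD_le_one z)
  have h₀ := gaussCDF_nonneg z
  have h₁ := gaussCDF_le_one z
  rw [gaussPrimitive₂]
  rcases le_total z 0 with hz | hz
  · rw [truncPow_succ_of_nonpos 1 hz, abs_le]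
    constructor <;> linarith [sq_mul_gaussCDF_le hz, mul_nonneg (sq_nonneg z) h₀]
  · have htail := sq_mul_gaussCDF_le (neg_nonpos.2 hz)
    rw [gaussCDF_neg, neg_sq] at htail
    rw [truncPow_of_nonneg 2 hz, Nat.factorial_two, Nat.cast_two, abs_le]
    constructor <;> linarith [mul_nonneg (sq_nonneg z) (sub_nonneg.2 h₁)]

end Gauss

/-! ### The smoothed distribution function and the Ornstein–Uhlenbeck equation -/

section SteinEquation

variable {n : ℕ} {a : Matrix (Fin n) (Fin n) ℝ} {C D lam : ℝ}

theorem abs_truncPow_one_sub_sub_le (z t : ℝ) : |truncPow 1 (z - t) - truncPow 1 z| ≤ |t| := by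
  simpa [truncPow_one, abs_sub_comm] using abs_max_sub_max_le_abs (z - t) z 0

theorem abs_truncPow_two_sub_sub_add_le (z t : ℝ) :
    |truncPow 2 (z - t) - truncPow 2 z + t * truncPow 1 z| ≤ t ^ 2 := by
  simp only [truncPow, Nat.factorial_two, Nat.cast_two]
  rcases max_cases (z - t) 0 with ⟨h₁, h₁'⟩ | ⟨h₁, h₁'⟩ <;>
    rcases max_cases z 0 with ⟨h₂, h₂'⟩ | ⟨h₂, h₂'⟩ <;>
    rw [h₁, h₂, abs_le] <;> constructor <;> nlinarith [sq_nonneg t]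

theorem exists_abs_smoothedFr_three_sub_le (a : Matrix (Fin n) (Fin n) ℝ) (hD : 0 < D) :
    ∃ K, ∀ z, |smoothedFr a D 3 z - truncPow 1 z| ≤ K := by
  obtain ⟨M, hM⟩ := Finite.exists_le fun π => |rankT a π|
  refine ⟨D + M, fun z => ?_⟩
  rw [← permExp_const (m := n) (truncPow 1 z), smoothedFr, ← permExp_sub]
  refine abs_permExp_le fun π => (abs_sub_le _ (truncPow 1 (z - rankT a π)) _).trans (add_le_add
    (abs_smoothedPow_sub_truncPow_le 0 _ hD fun y hy hyD => ?_)
    ((abs_truncPow_one_sub_sub_le z _).trans (hM π)))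
  exact (abs_secondDiff_truncPow_one_le hy _).trans hyD

theorem IsStandardized.permExp_rankT (ha : IsStandardized a) :
    permExp (fun π => rankT a π) = 0 := by
  have h := card_mul_minorMean_id (a := a) (R := univ) (C := univ) rfl
  simp only [ha.row_sum, sum_const_zero, card_univ, Fintype.card_fin] at h
  rw [permExp_rankT_eq_minorMean fun t => t]
  exact (mul_eq_zero.1 h).resolve_left ha.size_pos.ne'

theorem IsStandardized.exists_abs_smoothedFr_four_sub_le (ha : IsStandardized a) (hD : 0 < D) :
    ∃ K, ∀ z, |smoothedFr a D 4 z - truncPow 2 z| ≤ K := by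
  obtain ⟨M, hM⟩ := Finite.exists_le fun π => rankT a π ^ 2
  refine ⟨D ^ 2 + M, fun z => ?_⟩
  have hmean : truncPow 2 z = permExp fun π => truncPow 2 z - truncPow 1 z * rankT a π := by
    rw [permExp_sub, permExp_const_mul, ha.permExp_rankT, permExp_const, mul_zero, sub_zero]
  rw [hmean, smoothedFr, ← permExp_sub]
  refine abs_permExp_le fun π => (abs_sub_le _ (truncPow 2 (z - rankT a π)) _).trans (add_le_add
    (abs_smoothedPow_sub_truncPow_le 1 _ hD fun y hy hyD => ?_) ?_)
  · exact (abs_secondDiff_truncPow_two_le hy _).trans (pow_le_pow_left₀ hy hyD 2)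
  · rw [← sub_add, mul_comm]
    exact (abs_truncPow_two_sub_sub_add_le z _).trans (hM π)

theorem abs_permExp_rankT_mul_smoothedPow_sub_le (a : Matrix (Fin n) (Fin n) ℝ) (k : ℕ)
    (hD : 0 < D) (hC : ∀ x y, 0 ≤ y → y ≤ D → |secondDiff y (truncPow (k + 1)) x| ≤ C) (z : ℝ) :
    |permExp (fun π => rankT a π * smoothedPow D (k + 2) (z - rankT a π)) -
      (z * smoothedFr a D (k + 2) z - (k + 1) * smoothedFr a D (k + 3) z)| ≤ 3 * C := by
  simp only [smoothedFr, ← permExp_const_mul, ← permExp_sub]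
  refine abs_permExp_le fun π => ?_
  rw [← abs_neg]
  convert abs_mul_smoothedPow_sub_le k (z - rankT a π) hD (hC _) using 2
  ring

theorem MinorLipschitz.neg {f : ℝ → ℝ} {L : ℝ} (hf : MinorLipschitz a f L) :
    MinorLipschitz a (fun t => -f t) L := by
  intro R C h hc x y
  have hneg (x : ℝ) : minorMean a R C (fun t => -f t) x = -minorMean a R C f x := by
    simpa only [neg_one_mul] using minorMean_const_mul (-1) f x
  rw [hneg, hneg, neg_sub_neg, abs_sub_comm]
  exact hf R C h hc x y

theorem hasDerivAt_smoothedPow_const_sub (k : ℕ) (z t : ℝ) :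
    HasDerivAt (fun t => smoothedPow D (k + 2) (z - t)) (-smoothedPow D (k + 1) (z - t)) t :=
  (hasDerivAt_smoothedPow k (z - t)).comp_const_sub z t

theorem permExp_neg_smoothedPow (k : ℕ) (z : ℝ) :
    permExp (fun π => -smoothedPow D k (z - rankT a π)) = -smoothedFr a D k z := by
  rw [smoothedFr]
  simpa only [neg_one_mul] using permExp_const_mul (-1) _

theorem IsStandardized.abs_ou_smoothedFr_three_le (ha : IsStandardized a) (hn : 16 ≤ n)
    (hD : ∑ i, ∑ j, a i j ^ 4 = n * D ^ 2) (hD0 : 0 < D)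
    (hL : ∀ z, MinorLipschitz a (fun t => smoothedPow D 1 (z - t)) C) (z : ℝ) :
    |smoothedFr a D 1 z + z * smoothedFr a D 2 z - smoothedFr a D 3 z| ≤
      2560 * C * D + 3 * D := by
  have hstein := ha.abs_stein_remainder_le hn hD hD0.le (hasDerivAt_smoothedPow_const_sub 0 z)
    (hL z).neg
  have hkernel := abs_permExp_rankT_mul_smoothedPow_sub_le a 0 hD0
    (fun x y hy hyD => (abs_secondDiff_truncPow_one_le hy x).trans hyD) z
  simp only [zero_add, Nat.cast_zero, one_mul, permExp_neg_smoothedPow] at hstein hkernel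
  rw [abs_le] at *
  constructor <;> linarith

theorem IsStandardized.abs_ou_smoothedFr_four_le (ha : IsStandardized a) (hn : 16 ≤ n)
    (hD : ∑ i, ∑ j, a i j ^ 4 = n * D ^ 2) (hD0 : 0 < D) (hlam : ∑ i, ∑ j, a i j ^ 3 = n * lam)
    (hL : ∀ z, MinorLipschitz a (fun t => smoothedPow D 1 (z - t)) C) (z : ℝ) :
    |smoothedFr a D 2 z + z * smoothedFr a D 3 z - 2 * smoothedFr a D 4 z -
        lam / 2 * smoothedFr a D 1 z| ≤
      4400000 * C * D ^ 2 + 520 * (1 / n) + 3 * D ^ 2 := by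
  have hstein := ha.abs_stein_remainder_le₂ hn hD hD0.le hlam
    (hasDerivAt_smoothedPow_const_sub 1 z)
    (fun t => (hasDerivAt_smoothedPow_const_sub 0 z t).fun_neg.congr_deriv (neg_neg _))
    (hL z) (abs_smoothedFr_one_le a hD0 z)
  have hkernel := abs_permExp_rankT_mul_smoothedPow_sub_le a 1 hD0
    (fun x y hy hyD => (abs_secondDiff_truncPow_two_le hy x).trans (pow_le_pow_left₀ hy hyD 2)) z
  simp only [Nat.reduceAdd, Nat.cast_one, one_add_one_eq_two, zero_add,
    permExp_neg_smoothedPow, one_div_mul_cancel hD0.ne'] at hstein hkernel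
  rw [← smoothedFr] at hstein
  rw [abs_le] at *
  constructor <;> linarith

theorem IsStandardized.abs_smoothedFr_one_sub_gaussD_le (ha : IsStandardized a) (hn : 16 ≤ n)
    (hD : ∑ i, ∑ j, a i j ^ 4 = n * D ^ 2) (hD0 : 0 < D)
    (hL : ∀ z, MinorLipschitz a (fun t => smoothedPow D 1 (z - t)) C) (z : ℝ) :
    |smoothedFr a D 1 z - gaussD z| ≤ 14 * (2560 * C * D + 3 * D) := by
  obtain ⟨K₁, hK₁⟩ := exists_abs_smoothedFr_three_sub_le a hD0
  obtain ⟨K₂, hK₂⟩ := exists_abs_gaussPrimitive₁_sub_le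
  refine abs_second_deriv_le_of_abs_ou_le (u := fun x => smoothedFr a D 3 x - gaussPrimitive₁ x)
    (u' := fun x => smoothedFr a D 2 x - gaussCDF x)
    (u'' := fun x => smoothedFr a D 1 x - gaussD x) (K := K₁ + K₂) le_rfl
    (fun x => (hasDerivAt_smoothedFr a 1 x).sub (hasDerivAt_gaussPrimitive₁ x))
    (fun x => (hasDerivAt_smoothedFr a 0 x).sub (hasDerivAt_gaussCDF x))
    (fun x => (abs_sub_le _ (truncPow 1 x) _).trans (add_le_add (hK₁ x) ?_)) (fun x => ?_) z
  · exact (abs_sub_comm _ _).trans_le (hK₂ x)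
  · convert ha.abs_ou_smoothedFr_three_le hn hD hD0 hL x using 2
    rw [gaussPrimitive₁]
    ring

theorem IsStandardized.inv_le (ha : IsStandardized a) (hn : 2 ≤ n)
    (hD : ∑ i, ∑ j, a i j ^ 4 = n * D ^ 2) : 1 / (n : ℝ) ≤ 4 * D ^ 2 := by
  have hn' : (2 : ℝ) ≤ n := by exact_mod_cast hn
  have h := sum_mul_sq_le_sq_mul_sq (univ : Finset (Fin n × Fin n)) (fun _ => 1)
    (fun p => a p.1 p.2 ^ 2)
  simp only [one_mul, ← pow_mul, one_pow, sum_const, card_univ, nsmul_eq_mul, mul_one,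
    Fintype.card_prod, Fintype.card_fin, Nat.cast_mul, Fintype.sum_prod_type] at h
  norm_num only [ha.sum_sq, hD] at h
  rw [div_le_iff₀ ha.size_pos]
  refine le_of_mul_le_mul_left (a := (n : ℝ) ^ 2) ?_ (pow_pos ha.size_pos 2)
  nlinarith

theorem IsStandardized.abs_lam_mul_smoothedFr_one_sub_le (ha : IsStandardized a) (hn : 16 ≤ n)
    (hD : ∑ i, ∑ j, a i j ^ 4 = n * D ^ 2) (hD0 : 0 < D) (hlam : ∑ i, ∑ j, a i j ^ 3 = n * lam)
    (hL : ∀ z, MinorLipschitz a (fun t => smoothedPow D 1 (z - t)) C) (z : ℝ) :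
    |lam / 2 * (smoothedFr a D 1 z - gaussD z)| ≤ 7 * (2560 * C + 3) * D ^ 2 := by
  have hlamD := ha.abs_le_of_sum_pow_three_eq hD hD0.le hlam
  rw [abs_mul, abs_div, abs_two]
  calc |lam| / 2 * |smoothedFr a D 1 z - gaussD z|
      ≤ D / 2 * (14 * (2560 * C * D + 3 * D)) := by
        gcongr
        exact ha.abs_smoothedFr_one_sub_gaussD_le hn hD hD0 hL z
    _ = _ := by ring

/-- The Edgeworth expansion of first order with third moment `lam`. -/
noncomputable def edgeworth (lam x : ℝ) : ℝ := gaussCDF x - gaussD x * (lam / 6) * (x ^ 2 - 1)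

theorem hasDerivAt_edgeworth_antideriv₂ (lam x : ℝ) :
    HasDerivAt (fun x => gaussPrimitive₂ x - lam / 6 * gaussD x)
      (gaussPrimitive₁ x + lam / 6 * (x * gaussD x)) x := by
  refine ((hasDerivAt_gaussPrimitive₂ x).fun_sub
    ((hasDerivAt_gaussD x).const_mul (lam / 6))).congr_deriv ?_
  ring

theorem hasDerivAt_edgeworth_antideriv₁ (lam x : ℝ) :
    HasDerivAt (fun x => gaussPrimitive₁ x + lam / 6 * (x * gaussD x)) (edgeworth lam x) x := by
  refine ((hasDerivAt_gaussPrimitive₁ x).fun_add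
    (((hasDerivAt_id' x).fun_mul (hasDerivAt_gaussD x)).const_mul (lam / 6))).congr_deriv ?_
  rw [edgeworth]
  ring

theorem IsStandardized.abs_smoothedFr_two_sub_edgeworth_le (ha : IsStandardized a) (hn : 16 ≤ n)
    (hD : ∑ i, ∑ j, a i j ^ 4 = n * D ^ 2) (hD0 : 0 < D) (hlam : ∑ i, ∑ j, a i j ^ 3 = n * lam)
    (hL : ∀ z, MinorLipschitz a (fun t => smoothedPow D 1 (z - t)) C) (z : ℝ) :
    |smoothedFr a D 2 z - edgeworth lam z| ≤ 14 * ((4417920 * C + 2104) * D ^ 2) := by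
  obtain ⟨K₁, hK₁⟩ := ha.exists_abs_smoothedFr_four_sub_le hD0
  obtain ⟨K₂, hK₂⟩ := exists_abs_gaussPrimitive₂_sub_le
  refine abs_second_deriv_le_of_abs_ou_le
    (u := fun x => smoothedFr a D 4 x - (gaussPrimitive₂ x - lam / 6 * gaussD x))
    (u' := fun x => smoothedFr a D 3 x - (gaussPrimitive₁ x + lam / 6 * (x * gaussD x)))
    (u'' := fun x => smoothedFr a D 2 x - edgeworth lam x) (c := 2) (K := K₁ + K₂ + |lam / 6|)
    one_le_two (fun x => (hasDerivAt_smoothedFr a 2 x).sub (hasDerivAt_edgeworth_antideriv₂ lam x))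
    (fun x => (hasDerivAt_smoothedFr a 1 x).sub (hasDerivAt_edgeworth_antideriv₁ lam x))
    (fun x => ?_) (fun x => ?_) z
  · have hlam : |lam / 6 * gaussD x| ≤ |lam / 6| := by
      rw [abs_mul, abs_of_nonneg (gaussD_nonneg x)]
      exact mul_le_of_le_one_right (abs_nonneg _) (gaussD_le_one x)
    calc _ = |(smoothedFr a D 4 x - truncPow 2 x) - (gaussPrimitive₂ x - truncPow 2 x) +
          lam / 6 * gaussD x| := by congr 1; ring
      _ ≤ K₁ + K₂ + |lam / 6| := (abs_add_le _ _).trans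
        (add_le_add ((abs_sub _ _).trans (add_le_add (hK₁ x) (hK₂ x))) hlam)
  · have hou := ha.abs_ou_smoothedFr_four_le hn hD hD0 hlam hL x
    have hdensity := ha.abs_lam_mul_smoothedFr_one_sub_le hn hD hD0 hlam hL x
    calc _ = |(smoothedFr a D 2 x + x * smoothedFr a D 3 x - 2 * smoothedFr a D 4 x -
          lam / 2 * smoothedFr a D 1 x) + lam / 2 * (smoothedFr a D 1 x - gaussD x)| := by
          rw [edgeworth, gaussPrimitive₁, gaussPrimitive₂]
          congr 1
          ring
      _ ≤ (4417920 * C + 2104) * D ^ 2 := by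
        linarith [abs_add_le (smoothedFr a D 2 x + x * smoothedFr a D 3 x -
          2 * smoothedFr a D 4 x - lam / 2 * smoothedFr a D 1 x)
          (lam / 2 * (smoothedFr a D 1 x - gaussD x)), ha.inv_le (by lia) hD]

end SteinEquation

/-! ### Standardization and the main estimate -/

section Standardization

variable {n : ℕ} {A : Matrix (Fin n) (Fin n) ℝ}

theorem sum_ctr_row (A : Matrix (Fin n) (Fin n) ℝ) (i : Fin n) : ∑ j, ctr A i j = 0 := by
  have hn : (n : ℝ) ≠ 0 := Nat.cast_ne_zero.2 i.pos.ne'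
  simp only [ctr, colMean, rowMean, totMean, sum_add_distrib, sum_sub_distrib, sum_const,
    card_univ, Fintype.card_fin, nsmul_eq_mul, ← sum_div]
  rw [sum_comm (f := fun j i => A i j)]
  field_simp
  ring

theorem sum_ctr_col (A : Matrix (Fin n) (Fin n) ℝ) (j : Fin n) : ∑ i, ctr A i j = 0 := by
  have hn : (n : ℝ) ≠ 0 := Nat.cast_ne_zero.2 j.pos.ne'
  simp only [ctr, colMean, rowMean, totMean, sum_add_distrib, sum_sub_distrib, sum_const,
    card_univ, Fintype.card_fin, nsmul_eq_mul, ← sum_div]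
  field_simp
  ring

theorem isStandardized_hatM (hA : 0 < sdev A) : IsStandardized (hatM A) where
  row_sum i := by simp only [hatM, ← sum_div, sum_ctr_row, zero_div]
  col_sum j := by simp only [hatM, ← sum_div, sum_ctr_col, zero_div]
  sum_sq := by
    have hsigma : 0 < sigma2 A := Real.sqrt_pos.1 hA
    have hn : (n : ℝ) - 1 ≠ 0 := fun h => by simp [sigma2, h] at hsigma
    have hsq : sdev A ^ 2 = sigma2 A := Real.sq_sqrt hsigma.le
    simp only [hatM, div_pow, ← sum_div]
    rw [hsq, div_eq_iff hsigma.ne', sigma2, mul_div_cancel₀ _ hn]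

theorem rankTstd_eq_rankT_hatM (A : Matrix (Fin n) (Fin n) ℝ) : rankTstd A = rankT (hatM A) := by
  ext π
  rcases n.eq_zero_or_pos with rfl | hn
  · simp [rankTstd, rankT, muM]
  · have hn' : (n : ℝ) ≠ 0 := Nat.cast_ne_zero.2 hn.ne'
    simp only [rankTstd, rankT, hatM, ← sum_div, ctr, sum_add_distrib, sum_sub_distrib, sum_const,
      card_univ, Fintype.card_fin, nsmul_eq_mul]
    rw [Equiv.sum_comp π (colMean A)]
    simp only [muM, colMean, rowMean, totMean, ← sum_div]
    rw [sum_comm (f := fun j i => A i j)]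
    field_simp
    ring

theorem Fstd_eq_Fr_hatM (A : Matrix (Fin n) (Fin n) ℝ) : Fstd A = Fr (hatM A) := by
  ext z
  rw [Fstd, rankTstd_eq_rankT_hatM, Fr]

theorem sum_hatM_pow_four (A : Matrix (Fin n) (Fin n) ℝ) :
    ∑ i, ∑ j, hatM A i j ^ 4 = n * DM A ^ 2 := by
  rcases n.eq_zero_or_pos with rfl | hn
  · simp
  · rw [DM, Real.sq_sqrt (by unfold deltaM; positivity),
      mul_div_cancel₀ _ (Nat.cast_ne_zero.2 hn.ne'), deltaM]
    simp only [Even.pow_abs (by decide : Even 4)]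

theorem sum_hatM_pow_three (A : Matrix (Fin n) (Fin n) ℝ) :
    ∑ i, ∑ j, hatM A i j ^ 3 = n * lam1 A := by
  rcases n.eq_zero_or_pos with rfl | hn
  · simp
  · rw [lam1, mul_div_cancel₀ _ (Nat.cast_ne_zero.2 hn.ne')]

end Standardization

section MainEstimate

variable {n : ℕ} {a : Matrix (Fin n) (Fin n) ℝ} {D M lam : ℝ}

theorem abs_secondDiff_le_of_abs_Δiter_two_le {G : ℝ → ℝ} {C y : ℝ} (hC : 0 ≤ C) (hy : 0 ≤ y)
    (hyD : y ≤ D) (h : ∀ z, |Δiter y 2 G z| ≤ C * (D ^ 2 + y ^ 2)) (z : ℝ) :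
    |secondDiff y G z| ≤ 2 * C * D ^ 2 := by
  rw [← Δiter_two_sub]
  calc |Δiter y 2 G (z - y)| ≤ C * (D ^ 2 + y ^ 2) := h _
    _ ≤ C * (D ^ 2 + D ^ 2) := by gcongr
    _ = 2 * C * D ^ 2 := by ring

theorem abs_Fr_sub_edgeworth_le_two_add (a : Matrix (Fin n) (Fin n) ℝ) (hlam : |lam| ≤ D) (z : ℝ) :
    |Fr a z - edgeworth lam z| ≤ 2 + D ^ 2 := by
  have hterm : |lam * (gaussD z * (z ^ 2 - 1))| ≤ D * 2 := by
    rw [abs_mul]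
    exact mul_le_mul hlam (abs_gaussD_mul_sq_sub_one_le z) (abs_nonneg _)
      ((abs_nonneg _).trans hlam)
  rw [edgeworth]
  rw [abs_le] at *
  constructor <;> nlinarith [sq_nonneg (D - 1), Fr_nonneg a z, Fr_le_one a z, gaussCDF_nonneg z,
    gaussCDF_le_one z]

theorem IsStandardized.abs_Fr_sub_edgeworth_le_of_large (ha : IsStandardized a) (hn : 16 ≤ n)
    (hD : ∑ i, ∑ j, a i j ^ 4 = n * D ^ 2) (hD0 : 0 < D) (hlam : ∑ i, ∑ j, a i j ^ 3 = n * lam)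
    (hM : ∀ m, n ≤ m + 8 → ∀ ρ γ : Fin m → Fin n, StrictMono ρ → StrictMono γ →
      ∀ z y, 0 ≤ y → y ≤ D → |secondDiff y (Fr fun i j => a (ρ i) (γ j)) z| ≤ M * D ^ 2) (z : ℝ) :
    |Fr a z - edgeworth lam z| ≤ (62500000 * M + 30000) * D ^ 2 := by
  have hL := minorLipschitz_smoothedPow_one hD0 fun m hm ρ γ hρ hγ z =>
    hM m hm ρ γ hρ hγ z D hD0.le le_rfl
  have hsmooth := abs_smoothedFr_two_sub_Fr_le a hD0
    (hM n (n.le_add_right 8) id id strictMono_id strictMono_id z)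
  have hedge := ha.abs_smoothedFr_two_sub_edgeworth_le hn hD hD0 hlam hL z
  have hM0 : 0 ≤ M := (hL 0).nonneg
  calc |Fr a z - edgeworth lam z|
      ≤ |smoothedFr a D 2 z - Fr a z| + |smoothedFr a D 2 z - edgeworth lam z| := by
        rw [abs_sub_comm _ (Fr a z)]
        exact abs_sub_le _ _ _
    _ ≤ M * D ^ 2 + 14 * ((4417920 * M + 2104) * D ^ 2) := add_le_add hsmooth hedge
    _ ≤ (62500000 * M + 30000) * D ^ 2 := by nlinarith [mul_nonneg hM0 (sq_nonneg D), sq_nonneg D]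

-- For small `n` the bound is trivial because `1 ≤ 4 n D²`.
theorem IsStandardized.abs_Fr_sub_edgeworth_le (ha : IsStandardized a) (hn : 2 ≤ n)
    (hD : ∑ i, ∑ j, a i j ^ 4 = n * D ^ 2) (hD0 : 0 ≤ D) (hlam : ∑ i, ∑ j, a i j ^ 3 = n * lam)
    (hM0 : 0 ≤ M) (hM : ∀ m, 0 < m → n ≤ m + 8 → ∀ ρ γ : Fin m → Fin n, StrictMono ρ →
      StrictMono γ → ∀ z y, 0 ≤ y → y ≤ D →
        |secondDiff y (Fr fun i j => a (ρ i) (γ j)) z| ≤ M * D ^ 2) (z : ℝ) :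
    |Fr a z - edgeworth lam z| ≤ (62500000 * M + 30000) * D ^ 2 := by
  have hinv := ha.inv_le hn hD
  have hn0 := ha.size_pos
  rcases le_or_gt 16 n with hlarge | hsmall
  · have hDpos : 0 < D := by
      refine hD0.lt_of_ne' fun h => ?_
      rw [h] at hinv
      exact absurd hinv (by norm_num; lia)
    exact ha.abs_Fr_sub_edgeworth_le_of_large hlarge hD hDpos hlam
      (fun m hm => hM m (by lia) hm) z
  · have hD1 : 1 ≤ 64 * D ^ 2 := by
      rw [div_le_iff₀ hn0] at hinv
      have hn16 : (n : ℝ) ≤ 16 := by exact_mod_cast hsmall.le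
      nlinarith [mul_nonneg (sq_nonneg D) (sub_nonneg.2 hn16)]
    have htrivial := abs_Fr_sub_edgeworth_le_two_add a (ha.abs_le_of_sum_pow_three_eq hD hD0 hlam) z
    nlinarith [mul_nonneg hM0 (sq_nonneg D)]

end MainEstimate

/-- first-order Edgeworth expansion for linear rank statistics.  The
submatrices `B ∈ N(8, Â)` are parametrized by the number `r ≤ min 8 (n−1)` of deleted
rows/columns and strictly monotone maps selecting the kept rows and columns. -/
theorem rank_statistic_first_order_edgeworth :
    ∃ K2 : ℝ, 0 < K2 ∧ ∃ K3 : ℝ, 0 < K3 ∧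
      ∀ (n : ℕ), 2 ≤ n → ∀ A : Matrix (Fin n) (Fin n) ℝ, 0 < sdev A →
        ∀ C1 : ℝ, 0 < C1 →
          (∀ r : ℕ, r ≤ min 8 (n - 1) →
            ∀ ρ γ : Fin (n - r) → Fin n, StrictMono ρ → StrictMono γ →
              ∀ z y : ℝ, 0 ≤ y → y ≤ DM A →
                |Δiter y 2 (Fr (fun i j => hatM A (ρ i) (γ j))) z| ≤
                  C1 * (DM A ^ 2 + y ^ 2)) →
          ∀ z : ℝ, |Fstd A z - edge1 A z| ≤ (K2 * C1 + K3) * DM A ^ 2 := by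
  refine ⟨125000000, by norm_num, 30000, by norm_num, fun n hn A hA C1 hC1 H z => ?_⟩
  rw [Fstd_eq_Fr_hatM]
  refine ((isStandardized_hatM hA).abs_Fr_sub_edgeworth_le (M := 2 * C1) hn (sum_hatM_pow_four A)
    (Real.sqrt_nonneg _) (sum_hatM_pow_three A) (by positivity) ?_ z).trans_eq (by ring)
  intro m hm hnm ρ γ hρ hγ w y hy hyD
  have hmn : m ≤ n := by simpa using Fintype.card_le_of_injective ρ hρ.injective
  obtain ⟨r, hr, rfl⟩ : ∃ r ≤ min 8 (n - 1), m = n - r := ⟨n - m, by lia, by lia⟩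
  exact abs_secondDiff_le_of_abs_Δiter_two_le hC1.le hy hyD
    (fun z => H r hr ρ γ hρ hγ z y hy hyD) w
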